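/- arXiv:2403.09992 — 2 statements merged into one kernel-verified Lean document; each statement's English description precedes it below -/
import Mathlib

section
/- Let X be a geodesic metric space with basepoint o, let G be a countable group acting on X by isometries containing two independent contracting isometries, and let μ be a non-elementary probability measure on G with L(μ) < ∞. Then there exist K₁ > 0 and ε > 0 such that for all integers n, m ≥ 0, every g ∈ G, and every family of probability measures ν₁,…,ν_n, ν_{−1},…,ν_{−m} on G with ‖ν_i − μ‖_{0,1} < ε for each i, the expectation of the defect R_{n,m}((g_i)) is at most K₁, where g₀ = g is fixed and the g_i (1 ≤ i ≤ n and −m ≤ i ≤ −1) are independent random elements of G with law ν_i. -/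
open Filter Topology Pointwise

/-- `f` parametrizes a geodesic from `x` to `y` by arclength on `[0, dist x y]`. -/
def IsGeodesicSegment {X : Type*} [MetricSpace X] (f : ℝ → X) (x y : X) : Prop :=
  f 0 = x ∧ f (dist x y) = y ∧
    ∀ s ∈ Set.Icc (0 : ℝ) (dist x y), ∀ t ∈ Set.Icc (0 : ℝ) (dist x y),
      dist (f s) (f t) = |s - t|

/-- `X` is a geodesic metric space: any two points are joined by a geodesic. -/
def IsGeodesicSpace (X : Type*) [MetricSpace X] : Prop :=
  ∀ x y : X, ∃ f : ℝ → X, IsGeodesicSegment f x y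

/-- Nearest-point projection of `x` to the set `A`. -/
def projSet {X : Type*} [MetricSpace X] (A : Set X) (x : X) : Set X :=
  {a ∈ A | dist x a = Metric.infDist x A}

/-- Nearest-point projection of the set `B` to the set `A`. -/
def projSetOf {X : Type*} [MetricSpace X] (A B : Set X) : Set X :=
  ⋃ x ∈ B, projSet A x

/-- A `K`-quasigeodesic indexed by `ℤ`. -/
def IsQuasigeodesicZ {X : Type*} [MetricSpace X] (K : ℝ) (γ : ℤ → X) : Prop :=
  ∀ s t : ℤ, |(s : ℝ) - (t : ℝ)| / K - K ≤ dist (γ s) (γ t) ∧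
    dist (γ s) (γ t) ≤ K * |(s : ℝ) - (t : ℝ)| + K

/-- A `K`-contracting axis indexed by `ℤ`: a `K`-quasigeodesic such that every geodesic
staying `K`-far from it has nearest-point projection of diameter `< K`. -/
def IsContractingAxisZ {X : Type*} [MetricSpace X] (K : ℝ) (γ : ℤ → X) : Prop :=
  IsQuasigeodesicZ K γ ∧
    ∀ (f : ℝ → X) (x y : X), IsGeodesicSegment f x y →
      (∀ t ∈ Set.Icc (0 : ℝ) (dist x y), K ≤ Metric.infDist (f t) (Set.range γ)) →
      EMetric.diam (projSetOf (Set.range γ) (f '' Set.Icc (0 : ℝ) (dist x y)))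
        < ENNReal.ofReal K

/-- The `ℤ`-orbit of the basepoint `o` under powers of `g`. -/
def zorbit {G X : Type*} [Group G] [MetricSpace X] [MulAction G X] (o : X) (g : G) : Set X :=
  Set.range fun i : ℤ => g ^ i • o

/-- `g` is a contracting isometry: its orbit map `i ↦ g^i • o` is a `K`-contracting axis
for some `K > 1`. -/
def IsContractingIsom {G X : Type*} [Group G] [MetricSpace X] [MulAction G X]
    (o : X) (g : G) : Prop :=
  ∃ K : ℝ, 1 < K ∧ IsContractingAxisZ K fun i : ℤ => g ^ i • o

/-- `g` and `h` are independent contracting isometries: both are contracting, and the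
nearest-point projections of each orbit to the other are bounded. -/
def IndependentPair {G X : Type*} [Group G] [MetricSpace X] [MulAction G X]
    (o : X) (g h : G) : Prop :=
  IsContractingIsom o g ∧ IsContractingIsom o h ∧
    Bornology.IsBounded (projSetOf (zorbit o g) (zorbit o h)) ∧
    Bornology.IsBounded (projSetOf (zorbit o h) (zorbit o g))

/-- `G` contains two independent contracting isometries of `X`. -/
def HasIndepContracting (G : Type*) {X : Type*} [Group G] [MetricSpace X] [MulAction G X]
    (o : X) : Prop :=
  ∃ g h : G, IndependentPair o g h

/-- `μ` is a probability measure on the countable group `G`. -/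
def IsProbMeasure {G : Type*} (μ : G → ℝ) : Prop :=
  (∀ g, 0 ≤ μ g) ∧ Summable μ ∧ ∑' g, μ g = 1

/-- Convolution of two (signed) measures on `G`. -/
noncomputable def conv {G : Type*} [Group G] (μ ν : G → ℝ) : G → ℝ :=
  fun g => ∑' h : G, μ h * ν (h⁻¹ * g)

/-- `n`-fold convolution power of `μ`, with `convPow μ 0` the point mass at the identity. -/
noncomputable def convPow {G : Type*} [Group G] (μ : G → ℝ) : ℕ → G → ℝ
  | 0 => ({1} : Set G).indicator fun _ => (1 : ℝ)
  | n + 1 => conv μ (convPow μ n)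

/-- First moment `L(μ) = ∑_g μ(g) d(o, g o)`. -/
noncomputable def firstMoment {G X : Type*} [Group G] [MetricSpace X] [MulAction G X]
    (o : X) (μ : G → ℝ) : ℝ :=
  ∑' g : G, μ g * dist o (g • o)

/-- `μ` has finite first moment. -/
def HasFiniteFirstMoment {G X : Type*} [Group G] [MetricSpace X] [MulAction G X]
    (o : X) (μ : G → ℝ) : Prop :=
  Summable fun g : G => μ g * dist o (g • o)

/-- The escape rate `l(μ) = lim_n L(μ^{*n})/n`; by subadditivity of `n ↦ L(μ^{*n})`
(Fekete), the limit equals the infimum. -/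
noncomputable def escapeRate {G X : Type*} [Group G] [MetricSpace X] [MulAction G X]
    (o : X) (μ : G → ℝ) : ℝ :=
  ⨅ n : ℕ, firstMoment o (convPow μ (n + 1)) / (n + 1 : ℝ)

/-- `μ` is non-elementary: the sub-semigroup generated by its support contains
two independent contracting isometries. -/
def NonElementary {G X : Type*} [Group G] [MetricSpace X] [MulAction G X]
    (o : X) (μ : G → ℝ) : Prop :=
  ∃ g h : G, g ∈ Subsemigroup.closure {x : G | 0 < μ x} ∧
    h ∈ Subsemigroup.closure {x : G | 0 < μ x} ∧ IndependentPair o g h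

/-- The norm `‖η‖₀ + ‖η‖₁ = ∑_g (1 + d(o, g o))|η(g)|`, valued in `ℝ≥0∞` so that
finiteness is recorded. -/
noncomputable def enorm01 {G X : Type*} [Group G] [MetricSpace X] [MulAction G X]
    (o : X) (η : G → ℝ) : ENNReal :=
  ∑' g : G, ENNReal.ofReal ((1 + dist o (g • o)) * |η g|)

/-- The defect `d(o,a·o) + d(o,b·o) + d(o,c·o) − d(o,(abc)·o)`. -/
noncomputable def defect {G X : Type*} [Group G] [MetricSpace X] [MulAction G X]
    (o : X) (a b c : G) : ℝ :=
  dist o (a • o) + dist o (b • o) + dist o (c • o) - dist o ((a * b * c) • o)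

/-- Product `g_{-m} ⋯ g_{-1}` where `y j = g_{-(j+1)}`. -/
def negProd {G : Type*} [Group G] {m : ℕ} (y : Fin m → G) : G :=
  (List.ofFn y).reverse.prod

/-- Product `g_1 ⋯ g_n` where `z i = g_{i+1}`. -/
def posProd {G : Type*} [Group G] {n : ℕ} (z : Fin n → G) : G :=
  (List.ofFn z).prod

/-- Expected defect `E[R_{n,m}]` where `g₀ = g` is fixed and `g_i` has law `ν i`
for `i = 1,…,n` and `i = −1,…,−m`. -/
noncomputable def defectExpFam {G X : Type*} [Group G] [MetricSpace X] [MulAction G X]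
    (o : X) (ν : ℤ → G → ℝ) (m n : ℕ) (g : G) : ℝ :=
  ∑' p : (Fin m → G) × (Fin n → G),
    (∏ j : Fin m, ν (-(((j : ℕ) : ℤ) + 1)) (p.1 j)) *
      (∏ i : Fin n, ν (((i : ℕ) : ℤ) + 1) (p.2 i)) *
      defect o (negProd p.1) g (posProd p.2)

/-- Twice the Gromov product of `x` and `y` based at `o`. -/
def gV {X : Type*} [MetricSpace X] (o x y : X) : ℝ := dist o x + dist o y - dist x y

lemma gV_nonneg {X : Type*} [MetricSpace X] (o x y : X) : 0 ≤ gV o x y := by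
  unfold gV
  have := dist_triangle x o y
  rw [dist_comm x o] at this
  linarith

lemma mem_projSet_iff {X : Type*} [MetricSpace X] (A : Set X) (x a : X) :
    a ∈ projSet A x ↔ a ∈ A ∧ ∀ b ∈ A, dist x a ≤ dist x b := by
  constructor
  · rintro ⟨ha, h⟩
    exact ⟨ha, fun b hb => h ▸ Metric.infDist_le_dist_of_mem hb⟩
  · rintro ⟨ha, h⟩
    refine ⟨ha, le_antisymm ?_ (Metric.infDist_le_dist_of_mem ha)⟩
    exact (Metric.le_infDist ⟨a, ha⟩).2 h

lemma projSet_nonempty {X : Type*} [MetricSpace X] {K : ℝ} (hK : 1 < K) {γ : ℤ → X}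
    (hγ : IsQuasigeodesicZ K γ) (x : X) : (projSet (Set.range γ) x).Nonempty := by
  set T : Set ℤ := {i | dist x (γ i) ≤ dist x (γ 0)} with hT
  have hfin : T.Finite := by
    obtain ⟨R, hR⟩ := exists_nat_gt (K * (2 * dist x (γ 0) + K))
    apply (Set.finite_Icc (-(R:ℤ)) R).subset
    intro i hi
    have h1 := (hγ i 0).1
    have h2 : dist (γ i) (γ 0) ≤ 2 * dist x (γ 0) := by
      have := dist_triangle_left (γ i) (γ 0) x
      have hi' : dist x (γ i) ≤ dist x (γ 0) := hi
      linarith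
    have h3 : |(i:ℝ)| ≤ K * (2 * dist x (γ 0) + K) := by
      have : |(i:ℝ)| / K ≤ 2 * dist x (γ 0) + K := by
        simp at h1; linarith
      rw [div_le_iff₀ (by linarith)] at this
      linarith
    have h4 : |(i:ℝ)| < R := lt_of_le_of_lt h3 hR
    rw [abs_lt] at h4
    constructor
    · have := h4.1
      have : (-(R:ℤ)) < i := by exact_mod_cast this
      exact this.le
    · have := h4.2
      have : i < (R:ℤ) := by exact_mod_cast this
      exact this.le
  obtain ⟨i, hi, hmin⟩ := Set.exists_min_image T (fun i => dist x (γ i)) hfin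
    ⟨0, le_refl (dist x (γ 0))⟩
  refine ⟨γ i, (mem_projSet_iff _ _ _).2 ⟨⟨i, rfl⟩, ?_⟩⟩
  rintro _ ⟨j, rfl⟩
  by_cases hj : j ∈ T
  · exact hmin j hj
  · have h1 : dist x (γ i) ≤ dist x (γ 0) := hi
    have h2 : ¬ dist x (γ j) ≤ dist x (γ 0) := hj
    linarith

lemma contracting_pass {X : Type*} [MetricSpace X] (hgeo : IsGeodesicSpace X) {K : ℝ}
    (hK : 1 < K) {γ : ℤ → X} (hγ : IsContractingAxisZ K γ) {x z p q : X}
    (hp : p ∈ projSet (Set.range γ) x) (hq : q ∈ projSet (Set.range γ) z)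
    (hpq : K ≤ dist p q) : dist x p + dist p z - 8 * K ≤ dist x z := by
  obtain ⟨f, hf0, hf1, hf⟩ := hgeo x z
  have key : ∀ (f : ℝ → X) (x z p q : X), IsGeodesicSegment f x z →
      (∀ t ∈ Set.Icc (0 : ℝ) (dist x z), K ≤ Metric.infDist (f t) (Set.range γ)) →
      p ∈ projSet (Set.range γ) x → q ∈ projSet (Set.range γ) z → dist p q < K := by
    intro f x z p q hf h hp hq
    have h1 := hγ.2 f x z hf h
    have m : ∀ t ∈ Set.Icc (0:ℝ) (dist x z), ∀ p ∈ projSet (Set.range γ) (f t),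
        p ∈ projSetOf (Set.range γ) (f '' Set.Icc (0 : ℝ) (dist x z)) := by
      intro t ht p hp
      simp only [projSetOf, Set.mem_iUnion]
      exact ⟨f t, ⟨t, ht, rfl⟩, hp⟩
    have h2 := m 0 ⟨le_refl _, dist_nonneg⟩ p (by rw [hf.1]; exact hp)
    have h3 := m (dist x z) ⟨dist_nonneg, le_refl _⟩ q (by rw [hf.2.1]; exact hq)
    have h4 := lt_of_le_of_lt (Metric.edist_le_ediam_of_mem h2 h3) h1
    rw [edist_dist] at h4
    exact (ENNReal.ofReal_lt_ofReal_iff (by linarith)).1 h4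
  by_cases h : ∀ t ∈ Set.Icc (0 : ℝ) (dist x z), K ≤ Metric.infDist (f t) (Set.range γ)
  · have := key f x z p q ⟨hf0, hf1, hf⟩ h hp hq
    linarith
  push Not at h
  set T : Set ℝ := {t | t ∈ Set.Icc (0:ℝ) (dist x z) ∧
    Metric.infDist (f t) (Set.range γ) < K} with hT
  have hTne : T.Nonempty := by
    obtain ⟨t, ht, h⟩ := h
    exact ⟨t, ht, h⟩
  have hTb : BddBelow T := ⟨0, fun t ht => ht.1.1⟩
  set t1 := sInf T with ht1
  obtain ⟨t', ht'T, ht'⟩ := exists_lt_of_csInf_lt hTne (show sInf T < t1 + K by linarith)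
  have ht1' : t1 ≤ t' := csInf_le hTb ht'T
  have ht10 : 0 ≤ t1 := le_csInf hTne (fun t ht => ht.1.1)
  set u := max 0 (t1 - K) with hu
  have hu0 : 0 ≤ u := le_max_left _ _
  have hut' : u ≤ t' := max_le (by linarith) (by linarith)
  have hut2 : t' - u ≤ 2 * K := by
    have := le_max_right 0 (t1 - K)
    linarith
  have hud : u ∈ Set.Icc (0:ℝ) (dist x z) := ⟨hu0, hut'.trans ht'T.1.2⟩
  have hdu : dist x (f u) = u := by
    have := hf 0 ⟨le_refl _, dist_nonneg⟩ u hud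
    rw [hf0] at this
    rw [this, zero_sub, abs_neg, abs_of_nonneg hu0]
  have hdz : dist (f u) z = dist x z - u := by
    have := hf u hud (dist x z) ⟨dist_nonneg, le_refl _⟩
    rw [hf1] at this
    rw [this, abs_sub_comm, abs_of_nonneg (by linarith [hud.2])]
  have hinf : Metric.infDist (f u) (Set.range γ) ≤ 3 * K := by
    have h1 := Metric.infDist_le_infDist_add_dist (s := Set.range γ) (x := f u) (y := f t')
    have h2 := hf u hud t' ht'T.1
    rw [abs_sub_comm, abs_of_nonneg (by linarith)] at h2
    have h3 := ht'T.2
    linarith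
  have hfp : dist (f u) p ≤ 4 * K := by
    obtain ⟨r, hr⟩ := projSet_nonempty hK hγ.1 (f u)
    have hr2 := hr.2
    rcases eq_or_lt_of_le hu0 with h0 | h0
    · rw [← h0, hf0] at hinf ⊢
      rw [hp.2]; linarith
    · have hul : u < t1 := by
        have : u = t1 - K := by
          rcases max_choice 0 (t1 - K) with h | h
          · rw [← hu] at h; linarith
          · rw [← hu] at h; exact h
        linarith
      have h5 := key f x (f u) p r ⟨hf0, by rw [hdu], by
        rw [hdu]
        intro s hs t ht
        exact hf s ⟨hs.1, hs.2.trans hud.2⟩ t ⟨ht.1, ht.2.trans hud.2⟩⟩ (by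
        rw [hdu]
        intro t ht
        by_contra hc
        push Not at hc
        have : t1 ≤ t := csInf_le hTb ⟨⟨ht.1, ht.2.trans hud.2⟩, hc⟩
        linarith [ht.2]) hp hr
      have := dist_triangle_right (f u) p r
      linarith
  have h1 := dist_triangle x (f u) p
  have h2 := dist_triangle p (f u) z
  rw [dist_comm p (f u)] at h2
  linarith

section
variable {G X : Type*} [Group G] [MetricSpace X] [MulAction G X]

lemma zpow_mem_zorbit (o : X) (g : G) (i : ℤ) : g ^ i • o ∈ zorbit o g := ⟨i, rfl⟩

lemma projSet_equivariant (hiso : ∀ g : G, Isometry fun x : X => g • x) (o : X) (g : G)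
    (k : ℤ) {x p : X} (hp : p ∈ projSet (zorbit o g) x) :
    g ^ k • p ∈ projSet (zorbit o g) (g ^ k • x) := by
  rw [mem_projSet_iff] at hp ⊢
  obtain ⟨⟨i, rfl⟩, h⟩ := hp
  refine ⟨⟨k + i, by simp [zpow_add, mul_smul]⟩, ?_⟩
  rintro _ ⟨j, rfl⟩
  have e1 := (hiso (g ^ k)).dist_eq x (g ^ i • o)
  have e2 := (hiso (g ^ k)).dist_eq x (g ^ (j - k) • o)
  simp only [smul_smul, ← zpow_add, add_sub_cancel] at e1 e2
  simp only [smul_smul, ← zpow_add]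
  rw [e1, e2]
  exact h _ ⟨j - k, rfl⟩

lemma behrstock (hgeo : IsGeodesicSpace X) (o : X) {g h : G} {K D : ℝ} (hK : 1 < K)
    (hh : IsContractingAxisZ K fun i : ℤ => h ^ i • o)
    (hD : projSetOf (zorbit o h) (zorbit o g) ⊆ Metric.closedBall o D)
    {x p p' : X} (hp : p ∈ projSet (zorbit o g) x) (hp' : p' ∈ projSet (zorbit o h) x)
    (hfar : D + K ≤ dist p' o) : dist p o ≤ 2 * D + 8 * K := by
  obtain ⟨r, hr⟩ := projSet_nonempty hK hh.1 p
  have hrD : dist r o ≤ D := by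
    have : r ∈ projSetOf (zorbit o h) (zorbit o g) := by
      simp only [projSetOf, Set.mem_iUnion]
      exact ⟨p, hp.1, hr⟩
    exact hD this
  have h1 := dist_triangle_right p' r o
  have h1' := dist_triangle p' r o
  have h2 := contracting_pass hgeo hK hh (x := p) (z := x) (p := r) (q := p') hr hp'
    (by rw [dist_comm]; linarith)
  have h3 := ((mem_projSet_iff _ _ _).1 hp).2 o ⟨0, by simp⟩
  have h4 := dist_triangle p r o
  have h5 := dist_triangle_left x o r
  rw [dist_comm p x] at h2
  linarith

/-- The set of "Schottky" elements. -/
lemma schottky (hgeo : IsGeodesicSpace X) (hiso : ∀ g : G, Isometry fun x : X => g • x) (o : X)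
    {g h : G} (hgh : IndependentPair o g h) :
    ∃ (n m : ℕ) (C : ℝ) (A B : X → Fin 6 → Prop),
      (∀ x i j, A x i → A x j → i = j) ∧ (∀ x i j, B x i → B x j → i = j) ∧
      0 < n ∧ 0 < m ∧
      ∀ x y i, ¬ A x i → ¬ B y i →
        gV o x ((g ^ ((i + 1) * n) * h ^ m * g ^ ((6 - i) * n)) • y) ≤ C := by
  obtain ⟨⟨Kg, hKg, hg⟩, ⟨K, hK, hh⟩, -, hbd⟩ := hgh
  obtain ⟨D, hD⟩ := (Metric.isBounded_iff_subset_closedBall o).1 hbd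
  set E := 2 * D + 8 * K with hE
  have hD0 : 0 ≤ D := by
    have : o ∈ projSetOf (zorbit o h) (zorbit o g) := by
      simp only [projSetOf, Set.mem_iUnion]
      refine ⟨o, ⟨0, by simp⟩, (mem_projSet_iff _ _ _).2 ⟨⟨0, by simp⟩, ?_⟩⟩
      intro b _; simp
    simpa using hD this
  obtain ⟨R, hR⟩ := exists_nat_gt (Kg * (E + Kg))
  obtain ⟨m, hm⟩ := exists_nat_gt (K * (2 * E + 2 * K))
  have hne : ∀ x : X, ∃ j : ℤ, g ^ j • o ∈ projSet (zorbit o g) x := by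
    intro x
    obtain ⟨p, hp⟩ := projSet_nonempty hKg hg.1 x
    obtain ⟨j, rfl⟩ := hp.1
    exact ⟨j, hp⟩
  choose J hJ using hne
  -- elements projecting far away on the axis of `g` project near `o` on the axis of `h`
  have near : ∀ (x : X) (k : ℤ), ¬ (|J x + k| ≤ (R : ℤ)) →
      ∀ p' ∈ projSet (zorbit o h) (g ^ k • x), dist p' o ≤ E := by
    intro x k hk p' hp'
    by_contra hc
    push Not at hc
    have h1 := behrstock hgeo o hK hh hD (projSet_equivariant hiso o g k (hJ x)) hp'
      (by linarith)
    rw [smul_smul, ← zpow_add] at h1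
    have h2 := (hg.1 (k + J x) 0).1
    simp only [zpow_zero, one_smul] at h2
    have h3 : (R:ℝ) < |((k + J x : ℤ) : ℝ) - ((0:ℤ):ℝ)| := by
      push Not at hk
      rw [add_comm] at hk
      have : ((R:ℤ):ℝ) < ((|k + J x| : ℤ) : ℝ) := by exact_mod_cast hk
      simpa using this
    have h4 : |((k + J x : ℤ) : ℝ) - ((0:ℤ):ℝ)| / Kg ≤ E + Kg := by linarith
    rw [div_le_iff₀ (by linarith)] at h4
    linarith
  have hC : ∃ C, ∀ i : Fin 6, 2 * dist o (g ^ (((i:ℕ) + 1) * (2 * R + 1)) • o) + 2 * E + 8 * K ≤ C := by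
    obtain ⟨C, hC⟩ := (Set.finite_range fun i : Fin 6 =>
      2 * dist o (g ^ (((i:ℕ) + 1) * (2 * R + 1)) • o) + 2 * E + 8 * K).bddAbove
    exact ⟨C, fun i => hC ⟨i, rfl⟩⟩
  obtain ⟨C, hC⟩ := hC
  refine ⟨2 * R + 1, m, C, fun x i => |J x + -(((i:ℤ) + 1) * (2 * R + 1))| ≤ (R:ℤ),
    fun x i => |J x + (6 - (i:ℤ)) * (2 * R + 1)| ≤ (R:ℤ), ?_, ?_, by omega, ?_, ?_⟩
  · intro x i j hi hj
    rw [abs_le] at hi hj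
    by_contra hne
    rcases lt_or_gt_of_ne hne with hlt | hlt
    · have : (i:ℤ) + 1 ≤ (j:ℤ) := by exact_mod_cast hlt
      nlinarith
    · have : (j:ℤ) + 1 ≤ (i:ℤ) := by exact_mod_cast hlt
      nlinarith
  · intro x i j hi hj
    rw [abs_le] at hi hj
    by_contra hne
    rcases lt_or_gt_of_ne hne with hlt | hlt
    · have : (i:ℤ) + 1 ≤ (j:ℤ) := by exact_mod_cast hlt
      nlinarith
    · have : (j:ℤ) + 1 ≤ (i:ℤ) := by exact_mod_cast hlt
      nlinarith
  · have : (0:ℝ) < m := lt_of_le_of_lt (by positivity) hm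
    exact_mod_cast this
  · intro x y i hA hB
    refine le_trans ?_ (hC i)
    set a : ℕ := ((i:ℕ) + 1) * (2 * R + 1) with ha
    set b : ℕ := (6 - (i:ℕ)) * (2 * R + 1) with hb
    have hA' := near x (-(a:ℤ)) (by rw [ha]; push_cast; exact hA)
    have hB' := near y b (by
      rw [hb]; push_cast [Nat.cast_sub (show (i:ℕ) ≤ 6 by omega)]; exact hB)
    set x' := g ^ (-(a:ℤ)) • x with hx'
    set y' := g ^ (b:ℤ) • y with hy'
    obtain ⟨p, hp⟩ := projSet_nonempty hK hh.1 x'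
    obtain ⟨q, hq⟩ := projSet_nonempty hK hh.1 y'
    have h1 := hA' p hp
    have h2 := hB' q hq
    have h3 := projSet_equivariant hiso o h m hq
    have h4 := (hh.1 0 m).1
    simp only [zpow_zero, one_smul] at h4
    have h5 : 2 * E + 2 * K < |((0:ℤ):ℝ) - ((m:ℤ):ℝ)| / K := by
      rw [lt_div_iff₀ (by linarith)]
      simp
      linarith
    have h6 : dist (h ^ (m:ℤ) • q) (h ^ (m:ℤ) • o) = dist q o := (hiso _).dist_eq q o
    have h7 : dist o (h ^ (m:ℤ) • o) ≤ dist p o + dist p (h ^ (m:ℤ) • q) + dist q o := by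
      have e1 := dist_triangle4 o p (h ^ (m:ℤ) • q) (h ^ (m:ℤ) • o)
      rw [h6, dist_comm o p] at e1
      exact e1
    have h8 := contracting_pass hgeo hK hh hp h3 (by linarith)
    have e3 : gV o x ((g ^ a * h ^ m * g ^ b) • y) =
        dist (g ^ (-(a:ℤ)) • o) x' + dist (g ^ (-(a:ℤ)) • o) (h ^ (m:ℤ) • y')
          - dist x' (h ^ (m:ℤ) • y') := by
      have e : (h ^ (m:ℤ) • y') = g ^ (-(a:ℤ)) • ((g ^ a * h ^ m * g ^ b) • y) := by
        simp [hy', smul_smul, mul_assoc]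
      rw [e, hx']
      unfold gV
      have := fun u v => (hiso (g ^ (-(a:ℤ)))).dist_eq u v
      rw [this, this, this]
    have e4 : dist (g ^ (-(a:ℤ)) • o) o = dist o (g ^ a • o) := by
      have := (hiso (g ^ a)).dist_eq (g ^ (-(a:ℤ)) • o) o
      simp at this
      simp only [zpow_neg, zpow_natCast]
      exact this.symm
    have e5 := dist_triangle4 (g ^ (-(a:ℤ)) • o) o p x'
    have e6 := dist_triangle4 (g ^ (-(a:ℤ)) • o) o p (h ^ (m:ℤ) • y')
    rw [dist_comm o p] at e5 e6
    rw [dist_comm x' p] at h8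
    rw [e3]
    linarith
end


open scoped ENNReal

/-- Expectation of a function of independent random elements with laws given by a list. -/
noncomputable def Ex {G : Type*} : List (G → ℝ≥0∞) → (List G → ℝ≥0∞) → ℝ≥0∞
  | [], F => F []
  | p :: ps, F => ∑' g, p g * Ex ps (fun gs => F (g :: gs))

section
variable {G : Type*}

lemma Ex_mono (ps : List (G → ℝ≥0∞)) : ∀ {F F' : List G → ℝ≥0∞},
    (∀ l : List G, l.length = ps.length → F l ≤ F' l) → Ex ps F ≤ Ex ps F' := by
  induction ps with
  | nil => intro F F' h; exact h [] rfl
  | cons p ps ih =>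
    intro F F' h
    exact ENNReal.tsum_le_tsum fun g => mul_le_mul_right (ih fun l hl => h _ (by simp [hl])) _

lemma Ex_add (ps : List (G → ℝ≥0∞)) : ∀ (F F' : List G → ℝ≥0∞),
    Ex ps (fun l => F l + F' l) = Ex ps F + Ex ps F' := by
  induction ps with
  | nil => intro F F'; rfl
  | cons p ps ih =>
    intro F F'
    simp only [Ex, ih, mul_add, ENNReal.tsum_add]

lemma Ex_mul_left (ps : List (G → ℝ≥0∞)) (c : ℝ≥0∞) : ∀ (F : List G → ℝ≥0∞),
    Ex ps (fun l => c * F l) = c * Ex ps F := by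
  induction ps with
  | nil => intro F; rfl
  | cons p ps ih =>
    intro F
    simp only [Ex, ih, ← ENNReal.tsum_mul_left]
    congr 1; ext g; ring

lemma Ex_const (ps : List (G → ℝ≥0∞)) (hps : ∀ p ∈ ps, ∑' g, p g = 1) (c : ℝ≥0∞) :
    Ex ps (fun _ => c) = c := by
  induction ps with
  | nil => rfl
  | cons p ps ih =>
    simp only [Ex]
    rw [ih (fun p hp => hps p (by simp [hp])), ENNReal.tsum_mul_right, hps p (by simp), one_mul]

lemma Ex_tsum {ι : Type*} (ps : List (G → ℝ≥0∞)) : ∀ (F : ι → List G → ℝ≥0∞),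
    Ex ps (fun l => ∑' i, F i l) = ∑' i, Ex ps (F i) := by
  induction ps with
  | nil => intro F; rfl
  | cons p ps ih =>
    intro F
    simp only [Ex, ih, ← ENNReal.tsum_mul_left]
    rw [ENNReal.tsum_comm]

lemma Ex_swap (p : G → ℝ≥0∞) (ps : List (G → ℝ≥0∞)) (F : List G → ℝ≥0∞) :
    Ex (p :: ps) F = Ex ps (fun gs => ∑' g, p g * F (g :: gs)) := by
  rw [Ex_tsum]
  simp only [Ex, Ex_mul_left]

lemma Ex_append (ps qs : List (G → ℝ≥0∞)) : ∀ (F : List G → ℝ≥0∞),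
    Ex (ps ++ qs) F = Ex ps (fun l => Ex qs (fun l' => F (l ++ l'))) := by
  induction ps with
  | nil => intro F; rfl
  | cons p ps ih =>
    intro F
    simp only [List.cons_append, Ex, ih]

lemma Ex_lower (ps : List (G → ℝ≥0∞)) (c : ℝ≥0∞) : ∀ (w : List G), w.length = ps.length →
    (∀ p ∈ ps, ∀ a ∈ w, c ≤ p a) → ∀ F : List G → ℝ≥0∞, c ^ ps.length * F w ≤ Ex ps F := by
  induction ps with
  | nil =>
    intro w hw _ F
    simp at hw; subst hw; simp [Ex]
  | cons p ps ih =>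
    intro w hw h F
    cases w with
    | nil => simp at hw
    | cons a w =>
      simp at hw
      simp only [Ex, List.length_cons]
      refine le_trans ?_ (ENNReal.le_tsum a)
      rw [pow_succ', mul_assoc]
      exact mul_le_mul' (h p (by simp) a (by simp))
        (ih w hw (fun p hp b hb => h p (by simp [hp]) b (by simp [hb])) _)

open Classical in
/-- Law of the product of independent elements. -/
noncomputable def convL [Group G] (ps : List (G → ℝ≥0∞)) (g : G) : ℝ≥0∞ :=
  Ex ps (fun l => if l.prod = g then 1 else 0)

lemma Ex_prod [Group G] (ps : List (G → ℝ≥0∞)) (φ : G → ℝ≥0∞) :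
    Ex ps (fun l => φ l.prod) = ∑' g, convL ps g * φ g := by
  classical
  have : ∀ l : List G, φ l.prod = ∑' g, φ g * (if l.prod = g then 1 else 0) := by
    intro l
    rw [tsum_eq_single l.prod]
    · simp
    · intro b hb; simp [hb.symm]
  simp only [this, Ex_tsum, Ex_mul_left]
  congr 1; ext g
  rw [mul_comm]; congr 1

lemma convL_sum [Group G] (ps : List (G → ℝ≥0∞)) (hps : ∀ p ∈ ps, ∑' g, p g = 1) :
    ∑' g, convL ps g = 1 := by
  have := Ex_prod ps (fun _ => 1)
  simp only [mul_one] at this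
  rw [← this, Ex_const ps hps]

lemma convL_lower [Group G] (ps : List (G → ℝ≥0∞)) (c : ℝ≥0∞) (w : List G)
    (hw : w.length = ps.length) (h : ∀ p ∈ ps, ∀ a ∈ w, c ≤ p a) :
    c ^ ps.length ≤ convL ps w.prod := by
  have := Ex_lower ps c w hw h (fun l => by classical exact if l.prod = w.prod then 1 else 0)
  unfold convL
  simpa using this
end

section
variable {G X : Type*} [Group G] [MetricSpace X] [MulAction G X]

/-- Twice the displacement. -/
noncomputable def disp (o : X) (g : G) : ℝ≥0∞ := ENNReal.ofReal (2 * dist o (g • o))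

lemma disp_mul (hiso : ∀ g : G, Isometry fun x : X => g • x) (o : X) (g h : G) :
    disp o (g * h) ≤ disp o g + disp o h := by
  unfold disp
  rw [← ENNReal.ofReal_add (by positivity) (by positivity)]
  apply ENNReal.ofReal_le_ofReal
  have h1 := dist_triangle o (g • o) ((g * h) • o)
  have h2 := (hiso g).dist_eq o (h • o)
  simp only [smul_smul] at h2
  linarith

lemma Ex_disp_le (hiso : ∀ g : G, Isometry fun x : X => g • x) (o : X) (M : ℝ≥0∞)
    (ps : List (G → ℝ≥0∞)) (hps : ∀ p ∈ ps, ∑' g, p g = 1)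
    (hM : ∀ p ∈ ps, ∑' g, p g * disp o g ≤ M) :
    Ex ps (fun l => disp o l.prod) ≤ ps.length * M := by
  induction ps with
  | nil => simp [Ex, disp]
  | cons p ps ih =>
    have ih' := ih (fun p hp => hps p (by simp [hp])) (fun p hp => hM p (by simp [hp]))
    calc Ex (p :: ps) (fun l => disp o l.prod)
        ≤ ∑' g, p g * (disp o g + Ex ps (fun l => disp o l.prod)) := by
          simp only [Ex]
          refine ENNReal.tsum_le_tsum fun g => mul_le_mul_right ?_ _
          rw [← Ex_const ps (fun p hp => hps p (by simp [hp])) (disp o g), ← Ex_add]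
          refine Ex_mono ps fun l _ => ?_
          rw [List.prod_cons]
          exact disp_mul hiso o g l.prod
      _ = (∑' g, p g * disp o g) + Ex ps (fun l => disp o l.prod) := by
          simp only [mul_add, ENNReal.tsum_add]
          rw [ENNReal.tsum_mul_right, hps p (by simp), one_mul]
      _ ≤ M + ps.length * M := add_le_add (hM p (by simp)) ih'
      _ = _ := by push_cast [List.length_cons]; ring

lemma gV_mul (hiso : ∀ g : G, Isometry fun x : X => g • x) (o x y : X) (g : G) :
    ENNReal.ofReal (gV o x (g • y)) ≤ disp o g + ENNReal.ofReal (gV o (g⁻¹ • x) y) := by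
  unfold disp
  rw [← ENNReal.ofReal_add (by positivity) (gV_nonneg _ _ _)]
  apply ENNReal.ofReal_le_ofReal
  unfold gV
  have h1 := (hiso g).dist_eq (g⁻¹ • x) y
  have h2 := (hiso g).dist_eq o y
  have h3 := (hiso g).dist_eq o (g⁻¹ • x)
  simp only [smul_inv_smul] at h1 h3
  have h4 := dist_triangle o (g • o) x
  have h5 := dist_triangle o (g • o) (g • y)
  linarith

lemma gV_right (hiso : ∀ g : G, Isometry fun x : X => g • x) (o x : X) (g h : G) :
    ENNReal.ofReal (gV o x ((g * h) • o)) ≤ ENNReal.ofReal (gV o x (g • o)) + disp o h := by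
  unfold disp
  rw [← ENNReal.ofReal_add (gV_nonneg _ _ _) (by positivity)]
  apply ENNReal.ofReal_le_ofReal
  unfold gV
  have h1 := (hiso g).dist_eq o (h • o)
  simp only [smul_smul] at h1
  have h4 := dist_triangle o (g • o) ((g * h) • o)
  have h5 := dist_triangle_right x (g • o) ((g * h) • o)
  rw [dist_comm] at h5
  have h6 := dist_comm (g • o) x
  linarith

noncomputable def WA (o : X) (a : (G → ℝ≥0∞) → X → G → ℝ≥0∞) :
    List (G → ℝ≥0∞) → X → List G → ℝ≥0∞
  | p :: ps, x, g :: gs => disp o g + a p x g * WA o a ps (g⁻¹ • x) gs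
  | _, _, _ => 0

noncomputable def WB (o : X) (b : (G → ℝ≥0∞) → X → G → ℝ≥0∞) :
    List (G → ℝ≥0∞) → List G → ℝ≥0∞
  | p :: ps, g :: gs => disp o g + b p (gs.prod • o) g * WB o b ps gs
  | _, _ => 0

lemma Ex_WA (o : X) (a : (G → ℝ≥0∞) → X → G → ℝ≥0∞) (M lam B : ℝ≥0∞)
    (hB : M + lam * B ≤ B) (ps : List (G → ℝ≥0∞)) (hps : ∀ p ∈ ps, ∑' g, p g = 1)
    (hM : ∀ p ∈ ps, ∑' g, p g * disp o g ≤ M)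
    (ha : ∀ p ∈ ps, ∀ x, ∑' g, p g * a p x g ≤ lam) :
    ∀ x, Ex ps (WA o a ps x) ≤ B := by
  induction ps with
  | nil => intro x; simp [Ex, WA]
  | cons p ps ih =>
    intro x
    have ih' := ih (fun p hp => hps p (by simp [hp])) (fun p hp => hM p (by simp [hp]))
      (fun p hp => ha p (by simp [hp]))
    simp only [Ex, WA, Ex_add, Ex_mul_left,
      Ex_const ps (fun p hp => hps p (by simp [hp])), mul_add, ENNReal.tsum_add]
    refine le_trans (add_le_add (hM p (by simp)) ?_) hB
    calc ∑' g, p g * (a p x g * Ex ps (WA o a ps (g⁻¹ • x)))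
        ≤ ∑' g, p g * a p x g * B := ENNReal.tsum_le_tsum fun g => by
          rw [mul_assoc]
          exact mul_le_mul_right (mul_le_mul_right (ih' _) _) _
      _ ≤ lam * B := by
          rw [ENNReal.tsum_mul_right]
          exact mul_le_mul_left (ha p (by simp) x) _

lemma Ex_WB (o : X) (b : (G → ℝ≥0∞) → X → G → ℝ≥0∞) (M lam B : ℝ≥0∞)
    (hB : M + lam * B ≤ B) (ps : List (G → ℝ≥0∞)) (hps : ∀ p ∈ ps, ∑' g, p g = 1)
    (hM : ∀ p ∈ ps, ∑' g, p g * disp o g ≤ M)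
    (hb : ∀ p ∈ ps, ∀ x, ∑' g, p g * b p x g ≤ lam) :
    Ex ps (WB o b ps) ≤ B := by
  induction ps with
  | nil => simp [Ex, WB]
  | cons p ps ih =>
    have ih' := ih (fun p hp => hps p (by simp [hp])) (fun p hp => hM p (by simp [hp]))
      (fun p hp => hb p (by simp [hp]))
    rw [Ex_swap]
    refine le_trans ?_ hB
    calc Ex ps (fun gs => ∑' g, p g * WB o b (p :: ps) (g :: gs))
        ≤ Ex ps (fun gs => M + lam * WB o b ps gs) := Ex_mono ps fun gs _ => by
          simp only [WB, mul_add, ENNReal.tsum_add]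
          refine add_le_add (hM p (by simp)) ?_
          simp only [← mul_assoc]
          rw [ENNReal.tsum_mul_right]
          exact mul_le_mul_left (hb p (by simp) _) _
      _ = M + lam * Ex ps (WB o b ps) := by
          rw [Ex_add, Ex_mul_left, Ex_const ps (fun p hp => hps p (by simp [hp]))]
      _ ≤ _ := add_le_add le_rfl (mul_le_mul_right ih' _)

lemma pointwise_bound (hiso : ∀ g : G, Isometry fun x : X => g • x) (o : X)
    (a b : (G → ℝ≥0∞) → X → G → ℝ≥0∞) (C : ℝ≥0∞) (ps : List (G → ℝ≥0∞))
    (hab : ∀ p ∈ ps, ∀ x y g, ENNReal.ofReal (gV o x (g • y)) ≤ C ∨ 1 ≤ a p x g * b p y g) :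
    ∀ (l : List G), l.length = ps.length → ∀ (x : X) (A B : ℝ≥0∞), 1 ≤ A * B →
      ENNReal.ofReal (gV o x (l.prod • o)) ≤ C + (A * WA o a ps x l + B * WB o b ps l) := by
  induction ps with
  | nil =>
    intro l hl x A B _
    simp at hl; subst hl
    simp [gV, dist_comm]
  | cons p ps ih =>
    intro l hl x A B hAB
    cases l with
    | nil => simp at hl
    | cons g gs =>
      simp at hl
      rw [List.prod_cons, mul_smul]
      rcases hab p (by simp) x (gs.prod • o) g with h | h
      · exact h.trans le_self_add
      · have ih' := ih (fun p hp => hab p (by simp [hp])) gs hl (g⁻¹ • x) (A * a p x g)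
          (B * b p (gs.prod • o) g) (by
            calc (1 : ℝ≥0∞) = 1 * 1 := by simp
              _ ≤ (A * B) * (a p x g * b p (gs.prod • o) g) := mul_le_mul' hAB h
              _ = _ := by ring)
        have hA1 : 1 ≤ A + B := by
          by_contra hc
          push Not at hc
          have h1 : A < 1 := lt_of_le_of_lt le_self_add hc
          have h2 : B < 1 := lt_of_le_of_lt le_add_self hc
          have : A * B < 1 := by
            calc A * B ≤ A * 1 := mul_le_mul_right h2.le _
              _ < 1 := by simpa using h1
          exact absurd hAB (not_le.2 this)
        calc ENNReal.ofReal (gV o x (g • gs.prod • o))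
            ≤ disp o g + ENNReal.ofReal (gV o (g⁻¹ • x) (gs.prod • o)) := gV_mul hiso _ _ _ _
          _ ≤ (A + B) * disp o g + (C + (A * a p x g * WA o a ps (g⁻¹ • x) gs +
                B * b p (gs.prod • o) g * WB o b ps gs)) := by
              refine add_le_add ?_ ih'
              calc disp o g = 1 * disp o g := by simp
                _ ≤ _ := mul_le_mul_left hA1 _
          _ = _ := by
              simp only [WA, WB]; ring

lemma walk_bound (hiso : ∀ g : G, Isometry fun x : X => g • x) (o : X)
    (a b : (G → ℝ≥0∞) → X → G → ℝ≥0∞) (C M lam B : ℝ≥0∞)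
    (hB : M + lam * B ≤ B) (ps : List (G → ℝ≥0∞)) (hps : ∀ p ∈ ps, ∑' g, p g = 1)
    (hM : ∀ p ∈ ps, ∑' g, p g * disp o g ≤ M)
    (ha : ∀ p ∈ ps, ∀ x, ∑' g, p g * a p x g ≤ lam)
    (hb : ∀ p ∈ ps, ∀ x, ∑' g, p g * b p x g ≤ lam)
    (hab : ∀ p ∈ ps, ∀ x y g, ENNReal.ofReal (gV o x (g • y)) ≤ C ∨ 1 ≤ a p x g * b p y g)
    (x : X) : Ex ps (fun l => ENNReal.ofReal (gV o x (l.prod • o))) ≤ C + (B + B) := by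
  calc Ex ps (fun l => ENNReal.ofReal (gV o x (l.prod • o)))
      ≤ Ex ps (fun l => C + (WA o a ps x l + WB o b ps l)) := Ex_mono ps fun l hl => by
        have := pointwise_bound hiso o a b C ps hab l hl x 1 1 (by simp)
        simpa using this
    _ = C + (Ex ps (WA o a ps x) + Ex ps (WB o b ps)) := by
        rw [Ex_add, Ex_add, Ex_const ps hps]
    _ ≤ _ := add_le_add le_rfl (add_le_add (Ex_WA o a M lam B hB ps hps hM ha x)
        (Ex_WB o b M lam B hB ps hps hM hb))
end


section
variable {G X : Type*}

open Classical in
noncomputable def wS (s : Fin 6 → G) (A : Fin 6 → Prop) (t : G) : ℝ :=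
  ∑ i, if t = s i then (if A i then (1:ℝ) else -1/3) else 0

/-- Weight function. -/
noncomputable def wgt (s : Fin 6 → G) (A : X → Fin 6 → Prop) (κ : ℝ) (p : G → ℝ≥0∞) (x : X)
    (t : G) : ℝ≥0∞ :=
  ENNReal.ofReal (1 + κ / (p t).toReal * wS s (A x) t)

lemma wS_eq_zero (s : Fin 6 → G) (A : Fin 6 → Prop) (t : G) (h : ∀ i, t ≠ s i) :
    wS s A t = 0 := by
  unfold wS
  exact Finset.sum_eq_zero fun i _ => by simp [h i]

lemma wS_ge (s : Fin 6 → G) (A : Fin 6 → Prop) (t : G) : -2 ≤ wS s A t := by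
  classical
  have : ∑ i : Fin 6, (-1/3 : ℝ) ≤ wS s A t := by
    unfold wS
    refine Finset.sum_le_sum fun i _ => ?_
    split_ifs <;> norm_num
  simp at this
  linarith

lemma ratio_le {κ : ℝ} (hκ : 0 < κ) {p : G → ℝ≥0∞} (hp : ∑' g, p g = 1) {t : G}
    (ht : ENNReal.ofReal (2 * κ) ≤ p t) :
    2 * κ ≤ (p t).toReal ∧ 0 ≤ κ / (p t).toReal ∧ κ / (p t).toReal ≤ 1 / 2 := by
  have hfin : p t ≠ ⊤ := ne_top_of_le_ne_top (by rw [hp]; simp) (ENNReal.le_tsum t)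
  have h : 2 * κ ≤ (p t).toReal := (ENNReal.ofReal_le_iff_le_toReal hfin).1 ht
  refine ⟨h, by positivity, ?_⟩
  rw [div_le_div_iff₀ (by linarith) (by norm_num)]
  linarith

lemma wgt_nonneg (s : Fin 6 → G) (A : Fin 6 → Prop) {κ : ℝ} (hκ : 0 < κ) {p : G → ℝ≥0∞}
    (hp : ∑' g, p g = 1) (hs : ∀ i, ENNReal.ofReal (2 * κ) ≤ p (s i)) (t : G) :
    0 ≤ 1 + κ / (p t).toReal * wS s A t := by
  by_cases h : ∀ i, t ≠ s i
  · rw [wS_eq_zero s A t h]; simp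
  · push Not at h
    obtain ⟨i, rfl⟩ := h
    obtain ⟨-, h1, h2⟩ := ratio_le hκ hp (hs i)
    have := wS_ge s A (s i)
    nlinarith

lemma wgt_sum (s : Fin 6 → G) (A : X → Fin 6 → Prop) (hA : ∀ x i j, A x i → A x j → i = j)
    {κ : ℝ} (hκ : 0 < κ) {p : G → ℝ≥0∞}
    (hp : ∑' g, p g = 1) (hs : ∀ i, ENNReal.ofReal (2 * κ) ≤ p (s i)) (x : X) :
    ∑' t, p t * wgt s A κ p x t ≤ ENNReal.ofReal (1 - 2 * κ / 3) := by
  classical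
  have hfin : ∀ t, p t ≠ ⊤ := fun t =>
    ne_top_of_le_ne_top (by rw [hp]; simp) (ENNReal.le_tsum t)
  set q : G → ℝ := fun t => (p t).toReal with hq
  have hqs : HasSum q 1 := by
    have h1 : Summable q := ENNReal.summable_toReal (by rw [hp]; simp)
    have h2 : ∑' t, q t = 1 := by
      rw [hq, ← ENNReal.tsum_toReal_eq hfin, hp]; simp
    rw [← h2]; exact h1.hasSum
  have hw : HasSum (fun t => wS s (A x) t) (∑ i, if A x i then (1:ℝ) else -1/3) := by
    unfold wS
    refine hasSum_sum fun i _ => ?_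
    exact hasSum_ite_eq (s i) _
  have hval : (∑ i, if A x i then (1:ℝ) else -1/3) ≤ -2/3 := by
    by_cases h : ∃ i, A x i
    · obtain ⟨i0, hi0⟩ := h
      have : ∀ i, (if A x i then (1:ℝ) else -1/3) = -1/3 + if i = i0 then 4/3 else 0 := by
        intro i
        by_cases h : i = i0
        · subst h; simp [hi0]; norm_num
        · have : ¬ A x i := fun hc => h (hA x i i0 hc hi0)
          simp [h, this]
      simp only [this, Finset.sum_add_distrib]
      simp; norm_num
    · push Not at h
      simp [h]; norm_num
  have hterm : ∀ t, p t * wgt s A κ p x t = ENNReal.ofReal (q t + κ * wS s (A x) t) := by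
    intro t
    unfold wgt
    rw [← ENNReal.ofReal_toReal (hfin t), ← ENNReal.ofReal_mul ENNReal.toReal_nonneg]
    simp only [ENNReal.toReal_ofReal ENNReal.toReal_nonneg]
    congr 1
    change q t * _ = _
    by_cases h : ∀ i, t ≠ s i
    · rw [wS_eq_zero s _ t h]; simp
    · push Not at h
      obtain ⟨i, rfl⟩ := h
      obtain ⟨h0, -, -⟩ := ratio_le hκ hp (hs i)
      have : q (s i) ≠ 0 := by
        change (p (s i)).toReal ≠ 0
        linarith
      change q (s i) * (1 + κ / q (s i) * _) = _
      field_simp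
  have hnn : ∀ t, 0 ≤ q t + κ * wS s (A x) t := by
    intro t
    have h1 := wgt_nonneg s (A x) hκ hp hs t
    by_cases h : ∀ i, t ≠ s i
    · rw [wS_eq_zero s _ t h]; simp [hq]
    · push Not at h
      obtain ⟨i, rfl⟩ := h
      obtain ⟨h0, -, -⟩ := ratio_le hκ hp (hs i)
      have hq0 : 0 < q (s i) := by
        change 0 < (p (s i)).toReal
        linarith
      have h2 : 0 ≤ q (s i) * (1 + κ / q (s i) * wS s (A x) (s i)) := mul_nonneg hq0.le h1
      have h3 : q (s i) * (1 + κ / q (s i) * wS s (A x) (s i)) =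
        q (s i) + κ * wS s (A x) (s i) := by field_simp
      linarith
  have hsum := hqs.add (hw.mul_left κ)
  simp only [hterm]
  rw [← ENNReal.ofReal_tsum_of_nonneg hnn hsum.summable, hsum.tsum_eq]
  apply ENNReal.ofReal_le_ofReal
  nlinarith

lemma wgt_prod (s : Fin 6 → G) (A B : X → Fin 6 → Prop)
    (hA : ∀ x i j, A x i → A x j → i = j) (hB : ∀ x i j, B x i → B x j → i = j)
    {κ : ℝ} (hκ : 0 < κ) {p : G → ℝ≥0∞}
    (hp : ∑' g, p g = 1) (hs : ∀ i, ENNReal.ofReal (2 * κ) ≤ p (s i)) (x y : X) (t : G)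
    (h : ∀ i, t = s i → A x i ∨ B y i) :
    1 ≤ wgt s A κ p x t * wgt s B κ p y t := by
  classical
  unfold wgt
  rw [← ENNReal.ofReal_mul (wgt_nonneg s (A x) hκ hp hs t), ENNReal.one_le_ofReal]
  by_cases h0 : ∀ i, t ≠ s i
  · rw [wS_eq_zero s _ t h0, wS_eq_zero s _ t h0]; simp
  push Not at h0
  obtain ⟨i0, hi0⟩ := h0
  obtain ⟨-, hr0, hr1⟩ := ratio_le hκ hp (t := t) (hi0 ▸ hs i0)
  set r := κ / (p t).toReal
  set I := Finset.univ.filter (fun i => t = s i) with hI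
  have hform : ∀ A : Fin 6 → Prop, wS s A t = (4 * ((I.filter A).card : ℝ) - I.card) / 3 := by
    intro A
    unfold wS
    rw [← Finset.sum_filter, ← hI, Finset.sum_ite]
    have := Finset.card_filter_add_card_filter_not (s := I) A
    have h' : ((I.filter A).card : ℝ) + (I.filter (fun i => ¬ A i)).card = I.card := by
      exact_mod_cast this
    simp only [Finset.sum_const, nsmul_eq_mul]
    rw [← h']; ring
  have hα : (I.filter (A x)).card ≤ 1 := Finset.card_le_one.2 fun i hi j hj =>
    hA x i j (Finset.mem_filter.1 hi).2 (Finset.mem_filter.1 hj).2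
  have hβ : (I.filter (B y)).card ≤ 1 := Finset.card_le_one.2 fun i hi j hj =>
    hB y i j (Finset.mem_filter.1 hi).2 (Finset.mem_filter.1 hj).2
  have hc : I.card ≤ (I.filter (A x)).card + (I.filter (B y)).card := by
    refine le_trans (Finset.card_le_card ?_) (Finset.card_union_le _ _)
    intro i hi
    have := h i (Finset.mem_filter.1 hi).2
    simp only [Finset.mem_union, Finset.mem_filter]
    tauto
  have hc1 : 1 ≤ I.card := Finset.card_pos.2 ⟨i0, by simp [hI, hi0]⟩
  have hαc : (I.filter (A x)).card ≤ I.card := Finset.card_filter_le _ _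
  have hβc : (I.filter (B y)).card ≤ I.card := Finset.card_filter_le _ _
  rw [hform, hform]
  generalize (I.filter (A x)).card = α at *
  generalize (I.filter (B y)).card = β at *
  generalize I.card = c at *
  have hc2 : c ≤ 2 := by omega
  interval_cases α <;> interval_cases β <;> interval_cases c <;> first | omega | (norm_num; nlinarith)
end


section
variable {G X : Type*} [Group G] [MetricSpace X] [MulAction G X]

/-- `g` is a product of `N` elements of `U`. -/
def IsWord (U : Set G) (N : ℕ) (g : G) : Prop :=
  ∃ l : List G, l.length = N ∧ (∀ a ∈ l, a ∈ U) ∧ l.prod = g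

lemma IsWord.mul {U : Set G} {N M : ℕ} {g h : G} (hg : IsWord U N g) (hh : IsWord U M h) :
    IsWord U (N + M) (g * h) := by
  obtain ⟨l, h1, h2, h3⟩ := hg
  obtain ⟨l', h1', h2', h3'⟩ := hh
  refine ⟨l ++ l', by simp [h1, h1'], ?_, by simp [h3, h3']⟩
  intro a ha
  rcases List.mem_append.1 ha with h | h
  · exact h2 a h
  · exact h2' a h

lemma IsWord.pow {U : Set G} {N : ℕ} {g : G} (hg : IsWord U N g) (k : ℕ) :
    IsWord U (k * N) (g ^ k) := by
  induction k with
  | zero => exact ⟨[], by simp, by simp, by simp⟩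
  | succ k ih =>
    rw [pow_succ, add_mul, one_mul]
    exact ih.mul hg

lemma exists_isWord {U : Set G} {g : G} (hg : g ∈ Subsemigroup.closure U) :
    ∃ N, 0 < N ∧ IsWord U N g := by
  induction hg using Subsemigroup.closure_induction with
  | mem x hx => exact ⟨1, one_pos, [x], by simp, by simpa using hx, by simp⟩
  | mul x y _ _ hx hy =>
    obtain ⟨N, hN, h1⟩ := hx
    obtain ⟨M, hM, h2⟩ := hy
    exact ⟨N + M, by omega, h1.mul h2⟩

lemma exists_eps (μ : G → ℝ) (l : List G) (hl : ∀ a ∈ l, 0 < μ a) :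
    ∃ ε : ℝ, 0 < ε ∧ ε ≤ 1 ∧ ∀ a ∈ l, 2 * ε ≤ μ a := by
  induction l with
  | nil => exact ⟨1, by norm_num, le_refl _, by simp⟩
  | cons b l ih =>
    obtain ⟨ε, h0, h1, h2⟩ := ih (fun a ha => hl a (by simp [ha]))
    have hb := hl b (by simp)
    refine ⟨min ε (μ b / 2), by positivity, (min_le_left _ _).trans h1, ?_⟩
    intro a ha
    have e1 := min_le_left ε (μ b / 2)
    have e2 := min_le_right ε (μ b / 2)
    rcases List.mem_cons.1 ha with rfl | h
    · linarith
    · linarith [h2 a h]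

lemma blocks (N : ℕ) (hN : 0 < N) (P Q : (G → ℝ≥0∞) → Prop)
    (hPQ : ∀ qs : List (G → ℝ≥0∞), qs.length = N → (∀ q ∈ qs, P q) → Q (convL qs)) :
    ∀ (n : ℕ) (ps : List (G → ℝ≥0∞)), ps.length = n → (∀ p ∈ ps, P p) →
      ∃ bs rs : List (G → ℝ≥0∞), (∀ b ∈ bs, Q b) ∧ rs.length ≤ N ∧ (∀ p ∈ rs, P p) ∧
        ∀ φ : G → ℝ≥0∞, Ex ps (fun l => φ l.prod) =
          Ex bs (fun l => Ex rs (fun l' => φ (l.prod * l'.prod))) := by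
  intro n
  induction n using Nat.strong_induction_on with
  | _ n ih =>
    intro ps hps hP
    by_cases hn : n < N
    · refine ⟨[], ps, by simp, by omega, hP, ?_⟩
      intro φ
      simp [Ex]
    · push Not at hn
      obtain ⟨bs, rs, h1, h2, h3, h4⟩ := ih (n - N) (by omega) (ps.drop N) (by simp [hps])
        (fun p hp => hP p (List.mem_of_mem_drop hp))
      refine ⟨convL (ps.take N) :: bs, rs, ?_, h2, h3, ?_⟩
      · intro b hb
        rcases List.mem_cons.1 hb with rfl | hb
        · exact hPQ _ (by simp [hps, hn]) (fun q hq => hP q (List.mem_of_mem_take hq))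
        · exact h1 b hb
      · intro φ
        conv_lhs => rw [← List.take_append_drop N ps]
        rw [Ex_append]
        simp only [List.prod_append]
        have : ∀ l : List G, Ex (ps.drop N) (fun l' => φ (l.prod * l'.prod)) =
            Ex bs (fun l₁ => Ex rs (fun l' => φ (l.prod * (l₁.prod * l'.prod)))) :=
          fun l => h4 (fun g => φ (l.prod * g))
        simp only [this]
        rw [Ex_prod (ps.take N) (fun g => Ex bs (fun l₁ => Ex rs (fun l' => φ (g * (l₁.prod * l'.prod)))))]
        simp only [Ex, List.prod_cons, mul_assoc]

lemma core (hgeo : IsGeodesicSpace X) (hiso : ∀ g : G, Isometry fun x : X => g • x) (o : X)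
    (μ : G → ℝ) (hne : NonElementary o μ) (M : ℝ) (hM : 0 ≤ M) :
    ∃ K : ℝ, 0 ≤ K ∧ ∃ ε : ℝ, 0 < ε ∧ ∀ ps : List (G → ℝ≥0∞),
      (∀ p ∈ ps, ∑' g, p g = 1 ∧ ∑' g, p g * disp o g ≤ ENNReal.ofReal M ∧
        ∀ g, ENNReal.ofReal (μ g - ε) ≤ p g) →
      ∀ x, Ex ps (fun l => ENNReal.ofReal (gV o x (l.prod • o))) ≤ ENNReal.ofReal K := by
  obtain ⟨g, h, hg, hh, hgh⟩ := hne
  obtain ⟨n, m, C, A, B, hA, hB, hn, hm, hC⟩ := schottky hgeo hiso o hgh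
  obtain ⟨a, ha0, ha⟩ := exists_isWord hg
  obtain ⟨b, hb0, hb⟩ := exists_isWord hh
  set N := 7 * n * a + m * b with hN
  have hN0 : 0 < N := by positivity
  set s : Fin 6 → G := fun i => g ^ (((i:ℕ) + 1) * n) * h ^ m * g ^ ((6 - (i:ℕ)) * n) with hs
  have hword : ∀ i, IsWord {x : G | 0 < μ x} N (s i) := by
    intro i
    have := ((ha.pow (((i:ℕ) + 1) * n)).mul (hb.pow m)).mul (ha.pow ((6 - (i:ℕ)) * n))
    convert this using 1
    have h7 : ((i:ℕ) + 1) + (6 - (i:ℕ)) = 7 := by omega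
    rw [hN, ← h7]; ring
  choose w hw1 hw2 hw3 using hword
  obtain ⟨ε, hε, hε1, hεw⟩ := exists_eps μ (List.ofFn w).flatten (by
    intro c hc
    obtain ⟨l, hl, hc⟩ := List.mem_flatten.1 hc
    obtain ⟨i, rfl⟩ := (List.mem_ofFn' _ _).1 hl
    exact hw2 i c hc)
  have hεw' : ∀ i, ∀ c ∈ w i, 2 * ε ≤ μ c := fun i c hc =>
    hεw c (List.mem_flatten.2 ⟨w i, (List.mem_ofFn' _ _).2 ⟨i, rfl⟩, hc⟩)
  set κ := ε ^ N / 2 with hκ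
  have hκ0 : 0 < κ := by positivity
  have hκ1 : 2 * κ ≤ 1 := by
    have := pow_le_one₀ (n := N) hε.le hε1
    rw [hκ]; linarith
  set Bd := N * M * 3 / (2 * κ) with hBd
  have hBd0 : 0 ≤ Bd := by positivity
  refine ⟨max C 0 + (Bd + Bd) + N * M, by positivity, ε, hε, ?_⟩
  intro ps hps x
  obtain ⟨bs, rs, h1, h2, h3, h4⟩ := blocks N hN0
    (fun p => ∑' g, p g = 1 ∧ ∑' g, p g * disp o g ≤ ENNReal.ofReal M ∧
        ∀ g, ENNReal.ofReal (μ g - ε) ≤ p g)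
    (fun p => ∑' g, p g = 1 ∧ ∑' g, p g * disp o g ≤ ENNReal.ofReal (N * M) ∧
        ∀ i, ENNReal.ofReal (2 * κ) ≤ p (s i)) (by
      intro qs hqs hq
      refine ⟨convL_sum qs fun q h => (hq q h).1, ?_, ?_⟩
      · rw [← Ex_prod]
        have := Ex_disp_le hiso o (ENNReal.ofReal M) qs (fun q h => (hq q h).1)
          (fun q h => (hq q h).2.1)
        rw [hqs] at this
        rw [ENNReal.ofReal_mul (by positivity)]
        simpa using this
      · intro i
        have := convL_lower qs (ENNReal.ofReal ε) (w i) (by rw [hw1, hqs]) (by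
          intro p hp c hc
          refine le_trans ?_ ((hq p hp).2.2 c)
          apply ENNReal.ofReal_le_ofReal
          linarith [hεw' i c hc])
        rw [hw3, hqs, ← ENNReal.ofReal_pow hε.le] at this
        convert this using 2
        rw [hκ]; ring) ps.length ps rfl hps
  rw [h4 (fun g => ENNReal.ofReal (gV o x (g • o)))]
  have hrem : ∀ g : G, Ex rs (fun l' => ENNReal.ofReal (gV o x ((g * l'.prod) • o))) ≤
      ENNReal.ofReal (gV o x (g • o)) + ENNReal.ofReal (N * M) := by
    intro g
    calc _ ≤ Ex rs (fun l' => ENNReal.ofReal (gV o x (g • o)) + disp o l'.prod) :=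
          Ex_mono rs fun l _ => gV_right hiso o x g l.prod
      _ = ENNReal.ofReal (gV o x (g • o)) + Ex rs (fun l' => disp o l'.prod) := by
          rw [Ex_add, Ex_const rs fun p hp => (h3 p hp).1]
      _ ≤ _ := by
          refine add_le_add le_rfl ((Ex_disp_le hiso o (ENNReal.ofReal M) rs
            (fun q h => (h3 q h).1) (fun q h => (h3 q h).2.1)).trans ?_)
          rw [ENNReal.ofReal_mul (by positivity)]
          simp only [ENNReal.ofReal_natCast]
          exact mul_le_mul_left (by exact_mod_cast h2) _
  have hwalk := walk_bound hiso o (wgt s A κ) (wgt s B κ) (ENNReal.ofReal (max C 0))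
    (ENNReal.ofReal (N * M)) (ENNReal.ofReal (1 - 2 * κ / 3)) (ENNReal.ofReal Bd)
    (by
      rw [← ENNReal.ofReal_mul (by linarith), ← ENNReal.ofReal_add (by positivity)
        (mul_nonneg (by linarith) hBd0)]
      apply ENNReal.ofReal_le_ofReal
      have : N * M = 2 * κ / 3 * Bd := by rw [hBd]; field_simp
      rw [this]; linarith) bs (fun p hp => (h1 p hp).1) (fun p hp => (h1 p hp).2.1)
    (fun p hp x => wgt_sum s A hA hκ0 (h1 p hp).1 (h1 p hp).2.2 x)
    (fun p hp x => wgt_sum s B hB hκ0 (h1 p hp).1 (h1 p hp).2.2 x)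
    (by
      intro p hp x y t
      by_cases hbad : ∀ i, t = s i → A x i ∨ B y i
      · exact Or.inr (wgt_prod s A B hA hB hκ0 (h1 p hp).1 (h1 p hp).2.2 x y t hbad)
      · left
        push Not at hbad
        obtain ⟨i, rfl, hi1, hi2⟩ := hbad
        exact ENNReal.ofReal_le_ofReal ((hC x y i hi1 hi2).trans (le_max_left _ _))) x
  calc _ ≤ Ex bs (fun l => ENNReal.ofReal (gV o x (l.prod • o)) + ENNReal.ofReal (N * M)) :=
        Ex_mono bs fun l _ => hrem l.prod
    _ = Ex bs (fun l => ENNReal.ofReal (gV o x (l.prod • o))) + ENNReal.ofReal (N * M) := by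
        rw [Ex_add, Ex_const bs fun p hp => (h1 p hp).1]
    _ ≤ _ := by
        rw [ENNReal.ofReal_add (by positivity) (by positivity),
          ENNReal.ofReal_add (by positivity) (by positivity), ENNReal.ofReal_add hBd0 hBd0]
        exact add_le_add hwalk le_rfl

lemma zorbit_inv (o : X) (g : G) : zorbit o g⁻¹ = zorbit o g := by
  ext x
  constructor
  · rintro ⟨i, rfl⟩; exact ⟨-i, by simp⟩
  · rintro ⟨i, rfl⟩; exact ⟨-i, by simp⟩

lemma contracting_inv {o : X} {g : G} (h : IsContractingIsom o g) : IsContractingIsom o g⁻¹ := by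
  obtain ⟨K, hK, h1, h2⟩ := h
  refine ⟨K, hK, ?_, ?_⟩
  · intro s t
    have := h1 (-s) (-t)
    have e : |((-s : ℤ) : ℝ) - ((-t : ℤ) : ℝ)| = |(s:ℝ) - t| := by
      push_cast
      rw [← abs_neg]; congr 1; ring
    rw [e] at this
    simpa using this
  · have e : (Set.range fun i : ℤ => g⁻¹ ^ i • o) = Set.range fun i : ℤ => g ^ i • o :=
      zorbit_inv o g
    rw [e]
    exact h2

lemma nonElementary_inv {o : X} {μ : G → ℝ} (h : NonElementary o μ) :
    NonElementary o (fun g => μ g⁻¹) := by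
  obtain ⟨g, h, hg, hh, h1, h2, h3, h4⟩ := h
  have key : ∀ g : G, g ∈ Subsemigroup.closure {x : G | 0 < μ x} →
      g⁻¹ ∈ Subsemigroup.closure {x : G | 0 < μ x⁻¹} := by
    intro g hg
    induction hg using Subsemigroup.closure_induction with
    | mem x hx => exact Subsemigroup.subset_closure (by simpa using hx)
    | mul x y _ _ hx hy => rw [mul_inv_rev]; exact mul_mem hy hx
  refine ⟨g⁻¹, h⁻¹, key g hg, key h hh, contracting_inv h1, contracting_inv h2, ?_, ?_⟩
  · rwa [zorbit_inv, zorbit_inv]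
  · rwa [zorbit_inv, zorbit_inv]

lemma Ex_map_inv (ps : List (G → ℝ≥0∞)) : ∀ F : List G → ℝ≥0∞,
    Ex ps (fun l => F (l.map (·⁻¹))) = Ex (ps.map fun p g => p g⁻¹) F := by
  induction ps with
  | nil => intro F; rfl
  | cons p ps ih =>
    intro F
    simp only [Ex, List.map_cons]
    rw [← (Equiv.inv G).tsum_eq]
    simp only [Equiv.inv_apply, inv_inv]
    congr 1; ext g
    rw [← ih (fun l => F (g :: l))]

lemma Ex_ofFn : ∀ (n : ℕ) (P : Fin n → G → ℝ≥0∞) (F : List G → ℝ≥0∞),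
    ∑' z : Fin n → G, (∏ i, P i (z i)) * F (List.ofFn z) = Ex (List.ofFn P) F := by
  intro n
  induction n with
  | zero =>
    intro P F
    rw [tsum_eq_single (fun i => i.elim0) (fun b hb => absurd (Subsingleton.elim _ _) hb)]
    simp [Ex]
  | succ n ih =>
    intro P F
    rw [List.ofFn_succ]
    simp only [Ex, ← ih]
    rw [← (Fin.consEquiv (fun _ : Fin (n+1) => G)).tsum_eq, ENNReal.tsum_prod']
    congr 1; ext g
    rw [← ENNReal.tsum_mul_left]
    congr 1; ext z
    simp only [Fin.consEquiv, Equiv.coe_fn_mk, Fin.prod_univ_succ, Fin.cons_zero, Fin.cons_succ,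
      List.ofFn_succ, mul_assoc]

lemma law_good (o : X) (μ : G → ℝ) (hμ : IsProbMeasure μ) (hL : HasFiniteFirstMoment o μ)
    (ν : G → ℝ) (hν : IsProbMeasure ν) (ε : ℝ) (hε1 : ε ≤ 1)
    (h : enorm01 o (fun h => ν h - μ h) < ENNReal.ofReal ε) :
    ∑' g, ENNReal.ofReal (ν g) = 1 ∧
    ∑' g, ENNReal.ofReal (ν g) * disp o g ≤ ENNReal.ofReal (2 * firstMoment o μ + 2) ∧
    ∀ g, ENNReal.ofReal (μ g - ε) ≤ ENNReal.ofReal (ν g) := by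
  have hL0 : ∀ g, 0 ≤ μ g * dist o (g • o) := fun g => mul_nonneg (hμ.1 g) dist_nonneg
  refine ⟨?_, ?_, ?_⟩
  · rw [← ENNReal.ofReal_tsum_of_nonneg hν.1 hν.2.1, hν.2.2]; simp
  · calc ∑' g, ENNReal.ofReal (ν g) * disp o g
        ≤ ∑' g, (2 * ENNReal.ofReal (μ g * dist o (g • o)) +
            2 * ENNReal.ofReal ((1 + dist o (g • o)) * |ν g - μ g|)) := by
          refine ENNReal.tsum_le_tsum fun g => ?_
          unfold disp
          have e2 : (2 : ℝ≥0∞) = ENNReal.ofReal 2 := by simp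
          rw [e2, ← ENNReal.ofReal_mul (hν.1 g), ← ENNReal.ofReal_mul (by norm_num),
            ← ENNReal.ofReal_mul (by norm_num),
            ← ENNReal.ofReal_add (by have := hL0 g; positivity) (by positivity)]
          apply ENNReal.ofReal_le_ofReal
          have h1 := le_abs_self (ν g - μ g)
          have h2 : 0 ≤ dist o (g • o) := dist_nonneg
          have h3 := abs_nonneg (ν g - μ g)
          nlinarith
      _ = 2 * ENNReal.ofReal (firstMoment o μ) + 2 * enorm01 o (fun h => ν h - μ h) := by
          rw [ENNReal.tsum_add, ENNReal.tsum_mul_left, ENNReal.tsum_mul_left,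
            ← ENNReal.ofReal_tsum_of_nonneg hL0 hL]
          rfl
      _ ≤ 2 * ENNReal.ofReal (firstMoment o μ) + 2 * ENNReal.ofReal 1 := by
          refine add_le_add le_rfl (mul_le_mul_right ?_ _)
          exact h.le.trans (ENNReal.ofReal_le_ofReal hε1)
      _ = _ := by
          have e0 : 0 ≤ firstMoment o μ := tsum_nonneg hL0
          have e2 : (2 : ℝ≥0∞) = ENNReal.ofReal 2 := by simp
          rw [ENNReal.ofReal_add (by positivity) (by norm_num),
            ENNReal.ofReal_mul (by norm_num), e2]
          simp
  · intro g
    apply ENNReal.ofReal_le_ofReal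
    have h1 := lt_of_le_of_lt (ENNReal.le_tsum g) h
    have h2 := (ENNReal.ofReal_lt_ofReal_iff_of_nonneg (by positivity)).1 h1
    have h3 := neg_abs_le (ν g - μ g)
    have h4 : 0 ≤ dist o (g • o) := dist_nonneg
    have h5 := abs_nonneg (ν g - μ g)
    nlinarith

lemma disp_inv (hiso : ∀ g : G, Isometry fun x : X => g • x) (o : X) (g : G) :
    disp o g⁻¹ = disp o g := by
  unfold disp
  have := (hiso g).dist_eq o (g⁻¹ • o)
  simp only [smul_inv_smul] at this
  rw [← this, dist_comm]

lemma defect_eq (hiso : ∀ g : G, Isometry fun x : X => g • x) (o : X) (a g c : G) :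
    defect o a g c = gV o (g • o) (a⁻¹ • o) + gV o ((a * g)⁻¹ • o) (c • o) := by
  unfold defect gV
  have e : ∀ a : G, dist o (a⁻¹ • o) = dist o (a • o) := by
    intro a
    have := (hiso a).dist_eq o (a⁻¹ • o)
    simp only [smul_inv_smul] at this
    rw [← this, dist_comm]
  have h1 := (hiso a).dist_eq (g • o) (a⁻¹ • o)
  have h2 := (hiso (a * g)).dist_eq ((a * g)⁻¹ • o) (c • o)
  simp only [smul_inv_smul, smul_smul] at h1 h2
  rw [mul_inv_cancel, one_smul] at h1
  rw [mul_inv_cancel, one_smul] at h2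
  rw [e, e, ← h1, ← h2, dist_comm ((a * g) • o) o]
  ring
end


/-- Corollary 3.2 (bounded defect): the expected defect is uniformly bounded. -/
theorem bounded_defect
    {G X : Type*} [Group G] [Countable G] [MetricSpace X] [MulAction G X]
    (o : X) (hgeo : IsGeodesicSpace X)
    (hiso : ∀ g : G, Isometry fun x : X => g • x)
    (hind : HasIndepContracting G o)
    (μ : G → ℝ) (hμ : IsProbMeasure μ) (hne : NonElementary o μ)
    (hL : HasFiniteFirstMoment o μ) :
    ∃ K₁ : ℝ, 0 < K₁ ∧ ∃ ε : ℝ, 0 < ε ∧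
      ∀ (n m : ℕ) (g : G) (ν : ℤ → G → ℝ),
        (∀ i : ℤ, i ≠ 0 → IsProbMeasure (ν i) ∧
          enorm01 o (fun h => ν i h - μ h) < ENNReal.ofReal ε) →
        defectExpFam o ν m n g ≤ K₁ := by
  have hL0 : 0 ≤ firstMoment o μ := tsum_nonneg fun g => mul_nonneg (hμ.1 g) dist_nonneg
  obtain ⟨K, hK, ε, hε, hcore⟩ := core hgeo hiso o μ hne (2 * firstMoment o μ + 2) (by positivity)
  obtain ⟨K', hK', ε', hε', hcore'⟩ := core hgeo hiso o (fun g => μ g⁻¹) (nonElementary_inv hne)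
    (2 * firstMoment o μ + 2) (by positivity)
  refine ⟨K' + K + 1, by positivity, min 1 (min ε ε'), by positivity, ?_⟩
  intro n m g ν hν
  set δ := min 1 (min ε ε') with hδ
  have hδ1 : δ ≤ 1 := min_le_left _ _
  have hδε : δ ≤ ε := (min_le_right _ _).trans (min_le_left _ _)
  have hδε' : δ ≤ ε' := (min_le_right _ _).trans (min_le_right _ _)
  have hgood : ∀ i : ℤ, i ≠ 0 → _ := fun i hi =>
    law_good o μ hμ hL (ν i) (hν i hi).1 δ hδ1 (hν i hi).2
  set P : Fin m → G → ℝ≥0∞ := fun j g => ENNReal.ofReal (ν (-(((j : ℕ) : ℤ) + 1)) g) with hP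
  set Q : Fin n → G → ℝ≥0∞ := fun i g => ENNReal.ofReal (ν (((i : ℕ) : ℤ) + 1) g) with hQ
  have hQb : ∀ x, Ex (List.ofFn Q) (fun l => ENNReal.ofReal (gV o x (l.prod • o))) ≤
      ENNReal.ofReal K := by
    apply hcore
    intro p hp
    obtain ⟨i, rfl⟩ := (List.mem_ofFn' _ _).1 hp
    obtain ⟨h1, h2, h3⟩ := hgood (((i : ℕ) : ℤ) + 1) (by omega)
    exact ⟨h1, h2, fun g => le_trans (ENNReal.ofReal_le_ofReal (by linarith)) (h3 g)⟩
  have hQ1 : ∀ p ∈ List.ofFn Q, ∑' g, p g = 1 := by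
    intro p hp
    obtain ⟨i, rfl⟩ := (List.mem_ofFn' _ _).1 hp
    exact (hgood (((i : ℕ) : ℤ) + 1) (by omega)).1
  have hP1 : ∀ p ∈ List.ofFn P, ∑' g, p g = 1 := by
    intro p hp
    obtain ⟨i, rfl⟩ := (List.mem_ofFn' _ _).1 hp
    exact (hgood (-(((i : ℕ) : ℤ) + 1)) (by omega)).1
  have hPb : ∀ x, Ex ((List.ofFn P).map fun p g => p g⁻¹)
      (fun l => ENNReal.ofReal (gV o x (l.prod • o))) ≤ ENNReal.ofReal K' := by
    apply hcore'
    intro p hp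
    obtain ⟨p', hp', rfl⟩ := List.mem_map.1 hp
    obtain ⟨i, rfl⟩ := (List.mem_ofFn' _ _).1 hp'
    obtain ⟨h1, h2, h3⟩ := hgood (-(((i : ℕ) : ℤ) + 1)) (by omega)
    refine ⟨?_, ?_, fun g => le_trans (ENNReal.ofReal_le_ofReal (by linarith)) (h3 g⁻¹)⟩
    · rw [← h1, ← (Equiv.inv G).tsum_eq]; simp [hP]
    · rw [← (Equiv.inv G).tsum_eq]
      simp only [Equiv.inv_apply, inv_inv, disp_inv hiso]
      exact h2
  set T : (Fin m → G) × (Fin n → G) → ℝ≥0∞ := fun p =>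
    (∏ j, P j (p.1 j)) * ((∏ i, Q i (p.2 i)) *
      (ENNReal.ofReal (gV o (g • o) ((negProd p.1)⁻¹ • o)) +
        ENNReal.ofReal (gV o ((negProd p.1 * g)⁻¹ • o) (posProd p.2 • o)))) with hT
  have hterm : ∀ p : (Fin m → G) × (Fin n → G),
      (∏ j : Fin m, ν (-(((j : ℕ) : ℤ) + 1)) (p.1 j)) *
      (∏ i : Fin n, ν (((i : ℕ) : ℤ) + 1) (p.2 i)) *
      defect o (negProd p.1) g (posProd p.2) = (T p).toReal := by
    intro p
    have n1 : ∀ j : Fin m, 0 ≤ ν (-(((j : ℕ) : ℤ) + 1)) (p.1 j) := fun j =>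
      (hν _ (by omega)).1.1 _
    have n2 : ∀ i : Fin n, 0 ≤ ν (((i : ℕ) : ℤ) + 1) (p.2 i) := fun i =>
      (hν _ (by omega)).1.1 _
    have hd : 0 ≤ defect o (negProd p.1) g (posProd p.2) := by
      rw [defect_eq hiso]
      exact add_nonneg (gV_nonneg _ _ _) (gV_nonneg _ _ _)
    simp only [hT, hP, hQ]
    rw [ENNReal.toReal_mul, ENNReal.toReal_mul, ← ENNReal.ofReal_add (gV_nonneg _ _ _)
      (gV_nonneg _ _ _), ← defect_eq hiso, ENNReal.toReal_prod, ENNReal.toReal_prod,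
      ENNReal.toReal_ofReal hd, mul_assoc]
    simp only [ENNReal.toReal_ofReal (n1 _), ENNReal.toReal_ofReal (n2 _)]
  have hTsum : ∑' p, T p ≤ ENNReal.ofReal (K' + K + 1) := by
    have inner : ∀ y : Fin m → G, ∑' z : Fin n → G, T (y, z) ≤
        (∏ j, P j (y j)) * (ENNReal.ofReal (gV o (g • o) ((negProd y)⁻¹ • o)) +
          ENNReal.ofReal K) := by
      intro y
      simp only [hT]
      rw [ENNReal.tsum_mul_left]
      refine mul_le_mul_right ?_ _
      have := Ex_ofFn n Q (fun l => ENNReal.ofReal (gV o (g • o) ((negProd y)⁻¹ • o)) +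
        ENNReal.ofReal (gV o ((negProd y * g)⁻¹ • o) (l.prod • o)))
      simp only [posProd]
      rw [this, Ex_add, Ex_const _ hQ1]
      exact add_le_add le_rfl (hQb _)
    rw [ENNReal.tsum_prod']
    refine (ENNReal.tsum_le_tsum inner).trans ?_
    have e : ∀ y : Fin m → G, (negProd y)⁻¹ = ((List.ofFn y).map (·⁻¹)).prod := by
      intro y
      unfold negProd
      rw [List.prod_inv_reverse]
      simp
    simp only [e]
    have := Ex_ofFn m P (fun l => ENNReal.ofReal (gV o (g • o) ((l.map (·⁻¹)).prod • o)) +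
      ENNReal.ofReal K)
    rw [this, Ex_add, Ex_const _ hP1,
      Ex_map_inv (List.ofFn P) (fun l => ENNReal.ofReal (gV o (g • o) (l.prod • o)))]
    calc _ ≤ ENNReal.ofReal K' + ENNReal.ofReal K := add_le_add (hPb _) le_rfl
      _ ≤ _ := by
        rw [← ENNReal.ofReal_add hK' hK]
        exact ENNReal.ofReal_le_ofReal (by linarith)
  unfold defectExpFam
  simp only [hterm]
  rw [← ENNReal.tsum_toReal_eq]
  · exact ENNReal.toReal_le_of_le_ofReal (by positivity) hTsum
  · intro p
    exact ne_top_of_le_ne_top (ne_top_of_le_ne_top ENNReal.ofReal_ne_top hTsum)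
      (ENNReal.le_tsum p)
end

section
/- Let X be a geodesic metric space with basepoint o, let G be a countable group acting on X by isometries containing two independent contracting isometries, and let μ be a non-elementary probability measure on G with L(μ) < ∞. Let η be a signed measure on G with ‖η‖_{0,1} < ∞, and let (μ_t)_{t∈[−1,1]} be a family of probability measures on G with ‖μ_t − μ − tη‖_{0,1} = o(t) as t → 0. Assume the following uniform L¹-Cauchy property of the defects: there exists ε > 0 such that for every ε' > 0 there is N > 0 so that for every family (ν_i)_{i∈ℤ∖{0}} of probability measures with ‖ν_i − μ‖_{0,1} < ε, every g ∈ G, and all n, m, n', m' ≥ N, one has E|R_{n,m} − R_{n',m'}| < ε', where g₀ = g is fixed and the g_i (i ≠ 0) are independent with law ν_i. Then: (a) the limit Δ := lim_{n→∞} ∑_{g₁,g₂,g₃∈G} μ^{*n}(g₁)·η(g₂)·μ^{*n}(g₃)·( d(o,g₁·o) + d(o,g₂·o) + d(o,g₃·o) − d(o,(g₁g₂g₃)·o) ) exists, and (b) t ↦ l(μ_t) is differentiable at t = 0 with derivative ∑_{g∈G} η(g)·d(o,g·o) − Δ. -/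
open Filter Topology Pointwise

/-- `‖F t‖_{0,1} = o(t)` as `t → 0`. -/
def IsLittleO01 {G X : Type*} [Group G] [MetricSpace X] [MulAction G X]
    (o : X) (F : ℝ → G → ℝ) : Prop :=
  ∀ ε : ℝ, 0 < ε → ∃ δ : ℝ, 0 < δ ∧ ∀ t : ℝ, |t| < δ →
    enorm01 o (F t) ≤ ENNReal.ofReal (ε * |t|)

/-- Product `g_{-m}⋯g_{-1}` of the first `m` negative letters of a longer tuple. -/
def truncNegProd {G : Type*} [Group G] {M : ℕ} (y : Fin M → G) (m : ℕ) : G :=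
  ((List.ofFn y).take m).reverse.prod

/-- Product `g_1⋯g_n` of the first `n` positive letters of a longer tuple. -/
def truncPosProd {G : Type*} [Group G] {N : ℕ} (z : Fin N → G) (n : ℕ) : G :=
  ((List.ofFn z).take n).prod

/-- `E |R_{n,m} − R_{n',m'}|` where `g₀ = g` is fixed and `g_i` has law `ν i` for
`i ≠ 0`. -/
noncomputable def defectDiffExp {G X : Type*} [Group G] [MetricSpace X] [MulAction G X]
    (o : X) (ν : ℤ → G → ℝ) (g : G) (n m n' m' : ℕ) : ℝ :=
  ∑' p : (Fin (max m m') → G) × (Fin (max n n') → G),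
    (∏ j : Fin (max m m'), ν (-(((j : ℕ) : ℤ) + 1)) (p.1 j)) *
      (∏ i : Fin (max n n'), ν (((i : ℕ) : ℤ) + 1) (p.2 i)) *
      |defect o (truncNegProd p.1 m) g (truncPosProd p.2 n) -
        defect o (truncNegProd p.1 m') g (truncPosProd p.2 n')|

open scoped ENNReal

namespace EscSq

/-- Expectation in `ℝ≥0∞`. -/
noncomputable def ee {G : Type*} (α : G → ℝ) (F : G → ℝ≥0∞) : ℝ≥0∞ :=
  ∑' g, ENNReal.ofReal (α g) * F g

section A
variable {G : Type*}

lemma ee_add (α : G → ℝ) (F H : G → ℝ≥0∞) : ee α (fun g => F g + H g) = ee α F + ee α H := by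
  simp only [ee, mul_add, ENNReal.tsum_add]

lemma ee_mul (α : G → ℝ) (c : ℝ≥0∞) (F : G → ℝ≥0∞) : ee α (fun g => c * F g) = c * ee α F := by
  simp only [ee, ← ENNReal.tsum_mul_left]
  congr 1; ext g; ring

lemma ee_mono (α : G → ℝ) {F H : G → ℝ≥0∞} (h : ∀ g, F g ≤ H g) : ee α F ≤ ee α H :=
  ENNReal.tsum_le_tsum fun g => by gcongr; exact h g

lemma ee_const {α : G → ℝ} (hα : IsProbMeasure α) (c : ℝ≥0∞) : ee α (fun _ => c) = c := by
  simp only [ee, ENNReal.tsum_mul_right]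
  rw [← ENNReal.ofReal_tsum_of_nonneg hα.1 hα.2.1, hα.2.2]; simp

lemma ee_comm (α β : G → ℝ) (F : G → G → ℝ≥0∞) :
    ee α (fun a => ee β (fun b => F a b)) = ee β (fun b => ee α (fun a => F a b)) := by
  simp only [ee, ← ENNReal.tsum_mul_left]
  rw [ENNReal.tsum_comm]
  congr 1; ext b; congr 1; ext a; ring

lemma prob_of_ee {α : G → ℝ} (h0 : ∀ g, 0 ≤ α g) (h : ee α (fun _ => 1) = 1) :
    IsProbMeasure α := by
  have h' : ∑' g, ENNReal.ofReal (α g) = 1 := by simpa [ee] using h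
  have hs : Summable α := by
    have := ENNReal.summable_toReal (f := fun g => ENNReal.ofReal (α g)) (by rw [h']; simp)
    simpa [ENNReal.toReal_ofReal, h0] using this
  refine ⟨h0, hs, ?_⟩
  have := ENNReal.ofReal_tsum_of_nonneg h0 hs
  rw [h'] at this
  have h2 := congrArg ENNReal.toReal this
  rwa [ENNReal.toReal_ofReal (tsum_nonneg h0), ENNReal.toReal_one] at h2

/-- real tsum as toReal -/
lemma toReal_ee {α : G → ℝ} (h0 : ∀ g, 0 ≤ α g) {F : G → ℝ≥0∞} (hF : ∀ g, F g ≠ ⊤) :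
    (ee α F).toReal = ∑' g, α g * (F g).toReal := by
  rw [ee, ENNReal.tsum_toReal_eq (fun g => ENNReal.mul_ne_top ENNReal.ofReal_ne_top (hF g))]
  congr 1; ext g; rw [ENNReal.toReal_mul, ENNReal.toReal_ofReal (h0 g)]

lemma summable_ee {α : G → ℝ} (h0 : ∀ g, 0 ≤ α g) {F : G → ℝ≥0∞} (hF : ee α F ≠ ⊤) :
    Summable fun g => α g * (F g).toReal := by
  have := ENNReal.summable_toReal hF
  refine this.congr fun g => ?_
  rw [ENNReal.toReal_mul, ENNReal.toReal_ofReal (h0 g)]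

variable [Group G]

lemma prob_le_one {α : G → ℝ} (hα : IsProbMeasure α) (g : G) : α g ≤ 1 := by
  rw [← hα.2.2]; exact hα.2.1.le_tsum g (fun j _ => hα.1 j)

lemma conv_summable {α β : G → ℝ} (hα : IsProbMeasure α) (hβ : IsProbMeasure β) (g : G) :
    Summable fun h => α h * β (h⁻¹ * g) :=
  Summable.of_nonneg_of_le (fun h => mul_nonneg (hα.1 h) (hβ.1 _))
    (fun h => mul_le_of_le_one_right (hα.1 h) (prob_le_one hβ _)) hα.2.1

lemma conv_nonneg {α β : G → ℝ} (hα : IsProbMeasure α) (hβ : IsProbMeasure β) (g : G) :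
    0 ≤ conv α β g := tsum_nonneg fun h => mul_nonneg (hα.1 h) (hβ.1 _)

lemma ee_conv {α β : G → ℝ} (hα : IsProbMeasure α) (hβ : IsProbMeasure β) (F : G → ℝ≥0∞) :
    ee (conv α β) F = ee α (fun a => ee β (fun b => F (a * b))) := by
  have h1 : ∀ g, ENNReal.ofReal (conv α β g)
      = ∑' h, ENNReal.ofReal (α h) * ENNReal.ofReal (β (h⁻¹ * g)) := fun g => by
    rw [conv, ENNReal.ofReal_tsum_of_nonneg (fun h => mul_nonneg (hα.1 h) (hβ.1 _))
      (conv_summable hα hβ g)]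
    congr 1; ext h; rw [ENNReal.ofReal_mul (hα.1 h)]
  simp only [ee, h1, ← ENNReal.tsum_mul_left, ← ENNReal.tsum_mul_right]
  rw [ENNReal.tsum_comm]
  congr 1; ext a
  rw [← (Equiv.mulLeft a).tsum_eq]
  congr 1; ext b
  simp [mul_assoc]

lemma ee_pow_zero (α : G → ℝ) (F : G → ℝ≥0∞) : ee (convPow α 0) F = F 1 := by
  rw [ee, tsum_eq_single 1]
  · simp [convPow]
  · intro b hb; simp [convPow, hb]

lemma prob_pow {α : G → ℝ} (hα : IsProbMeasure α) : ∀ n, IsProbMeasure (convPow α n)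
  | 0 => prob_of_ee (fun g => by
      unfold convPow; exact Set.indicator_nonneg (fun _ _ => zero_le_one) g) (ee_pow_zero _ _)
  | n + 1 => prob_of_ee (fun g => conv_nonneg hα (prob_pow hα n) g) (by
      show ee (conv α (convPow α n)) _ = 1
      rw [ee_conv hα (prob_pow hα n)]
      simp only [ee_const (prob_pow hα n), ee_const hα])

lemma ee_pow_succ {α : G → ℝ} (hα : IsProbMeasure α) (n : ℕ) (F : G → ℝ≥0∞) :
    ee (convPow α (n + 1)) F = ee α (fun a => ee (convPow α n) (fun b => F (a * b))) :=
  ee_conv hα (prob_pow hα n) F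

lemma ee_pow_add {α : G → ℝ} (hα : IsProbMeasure α) (m n : ℕ) (F : G → ℝ≥0∞) :
    ee (convPow α (m + n)) F
      = ee (convPow α m) (fun a => ee (convPow α n) (fun b => F (a * b))) := by
  induction m generalizing F with
  | zero => simp [ee_pow_zero]
  | succ m ih =>
    rw [show m + 1 + n = (m + n) + 1 by ring, ee_pow_succ hα, ee_pow_succ hα]
    congr 1; ext a
    rw [ih]; simp only [mul_assoc]

lemma ee_pow_one {α : G → ℝ} (hα : IsProbMeasure α) (F : G → ℝ≥0∞) :
    ee (convPow α 1) F = ee α F := by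
  rw [ee_pow_succ hα]; simp [ee_pow_zero]

lemma ee_pow_succ' {α : G → ℝ} (hα : IsProbMeasure α) (n : ℕ) (F : G → ℝ≥0∞) :
    ee (convPow α (n + 1)) F = ee (convPow α n) (fun b => ee α (fun a => F (b * a))) := by
  rw [ee_pow_add hα]; simp only [ee_pow_one hα]

/-! ### tuples -/

lemma pos_tuple {β : G → ℝ} (hβ : IsProbMeasure β) (M n : ℕ) (h : n ≤ M) (F : G → ℝ≥0∞) :
    ∑' z : Fin M → G, (∏ i, ENNReal.ofReal (β (z i))) * F (truncPosProd z n)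
      = ee (convPow β n) F := by
  induction M generalizing n F with
  | zero =>
    obtain rfl : n = 0 := by omega
    rw [ee_pow_zero, tsum_eq_single default (fun b hb => (hb (Subsingleton.elim _ _)).elim)]
    simp [truncPosProd]
  | succ M ih =>
    rw [← (Fin.consEquiv (fun _ : Fin (M + 1) => G)).tsum_eq, ENNReal.tsum_prod']
    cases n with
    | zero =>
      have := ih 0 (by omega) F
      simp only [truncPosProd, List.take_zero, List.prod_nil, ee_pow_zero] at this ⊢
      simp only [Fin.consEquiv_apply, Fin.prod_univ_succ, Fin.cons_zero, Fin.cons_succ, mul_assoc,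
        ENNReal.tsum_mul_left, this]
      exact ee_const hβ (F 1)
    | succ n =>
      rw [ee_pow_succ hβ, ee]
      congr 1; ext x
      rw [← ih n (by omega), ← ENNReal.tsum_mul_left]
      congr 1; ext z
      simp [Fin.prod_univ_succ, truncPosProd, mul_assoc]

lemma neg_tuple {β : G → ℝ} (hβ : IsProbMeasure β) (M n : ℕ) (h : n ≤ M) (F : G → ℝ≥0∞) :
    ∑' z : Fin M → G, (∏ i, ENNReal.ofReal (β (z i))) * F (truncNegProd z n)
      = ee (convPow β n) F := by
  induction M generalizing n F with
  | zero =>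
    obtain rfl : n = 0 := by omega
    rw [ee_pow_zero, tsum_eq_single default (fun b hb => (hb (Subsingleton.elim _ _)).elim)]
    simp [truncNegProd]
  | succ M ih =>
    rw [← (Fin.consEquiv (fun _ : Fin (M + 1) => G)).tsum_eq, ENNReal.tsum_prod']
    cases n with
    | zero =>
      have := ih 0 (by omega) F
      simp only [truncNegProd, List.take_zero, List.reverse_nil, List.prod_nil, ee_pow_zero]
        at this ⊢
      simp only [Fin.consEquiv_apply, Fin.prod_univ_succ, Fin.cons_zero, Fin.cons_succ, mul_assoc,
        ENNReal.tsum_mul_left, this]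
      exact ee_const hβ (F 1)
    | succ n =>
      rw [ee_pow_succ' hβ, ee_comm, ee]
      congr 1; ext x
      rw [← ih n (by omega), ← ENNReal.tsum_mul_left]
      congr 1; ext z
      simp [Fin.prod_univ_succ, truncNegProd, mul_assoc]

lemma tuple2 {α β : G → ℝ} (hα : IsProbMeasure α) (hβ : IsProbMeasure β) (M M' m n : ℕ)
    (hm : m ≤ M) (hn : n ≤ M') (F : G → G → ℝ≥0∞) :
    ∑' p : (Fin M → G) × (Fin M' → G),
      ((∏ i, ENNReal.ofReal (α (p.1 i))) * (∏ i, ENNReal.ofReal (β (p.2 i)))) *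
        F (truncNegProd p.1 m) (truncPosProd p.2 n)
      = ee (convPow α m) (fun a => ee (convPow β n) (fun c => F a c)) := by
  rw [ENNReal.tsum_prod', ← neg_tuple hα M m hm]
  congr 1; ext y
  rw [← pos_tuple hβ M' n hn, ← ENNReal.tsum_mul_left]
  congr 1; ext z; ring

end A
end EscSq

namespace EscSq

/-- length function -/
structure IsLen {G : Type*} [Group G] (d : G → ℝ) : Prop where
  nn : ∀ a, 0 ≤ d a
  tri : ∀ a b, d (a * b) ≤ d a + d b
  lft : ∀ a b, d a ≤ d (a * b) + d b
  rgt : ∀ a b, d b ≤ d (a * b) + d a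
  one : d 1 = 0

section B
variable {G : Type*} [Group G]

/-- abstract defect -/
def df (d : G → ℝ) (a b c : G) : ℝ := d a + d b + d c - d (a * b * c)

lemma df_nonneg {d : G → ℝ} (hd : IsLen d) (a b c : G) : 0 ≤ df d a b c := by
  have := hd.tri (a * b) c; have := hd.tri a b; unfold df; linarith

lemma df_le {d : G → ℝ} (hd : IsLen d) (a b c : G) : df d a b c ≤ 2 * d b + 2 * d c := by
  have := hd.lft (a * b) c; have := hd.lft a b; unfold df; linarith

lemma df_le' {d : G → ℝ} (hd : IsLen d) (a b c : G) : df d a b c ≤ 2 * d a + 2 * d b := by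
  have := hd.rgt (a * b) c; have := hd.tri a b; unfold df; linarith

/-- length expectation -/
noncomputable def LE (d : G → ℝ) (α : G → ℝ) : ℝ≥0∞ := ee α (fun g => ENNReal.ofReal (d g))

/-- expected defect -/
noncomputable def phiE (d : G → ℝ) (α β : G → ℝ) (m n : ℕ) (g : G) : ℝ≥0∞ :=
  ee (convPow α m) fun a => ee (convPow β n) fun c => ENNReal.ofReal (df d a g c)

/-- expected total length -/
noncomputable def psiE (d : G → ℝ) (α β : G → ℝ) (m n : ℕ) (g : G) : ℝ≥0∞ :=
  ee (convPow α m) fun a => ee (convPow β n) fun c => ENNReal.ofReal (d (a * g * c))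

/-- expected length of mixed products -/
noncomputable def sE (d : G → ℝ) (α β : G → ℝ) (m n : ℕ) : ℝ≥0∞ :=
  ee (convPow α m) fun a => ee (convPow β n) fun c => ENNReal.ofReal (d (a * c))

variable {d : G → ℝ} (hd : IsLen d) {α β : G → ℝ} (hα : IsProbMeasure α) (hβ : IsProbMeasure β)

section
include hd hα
lemma LE_pow_add_le (m n : ℕ) :
    LE d (convPow α (m + n)) ≤ LE d (convPow α m) + LE d (convPow α n) := by
  rw [LE, ee_pow_add hα]
  calc _ ≤ ee (convPow α m) (fun a => ee (convPow α n)
            (fun b => ENNReal.ofReal (d a) + ENNReal.ofReal (d b))) := by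
        refine ee_mono _ fun a => ee_mono _ fun b => ?_
        rw [← ENNReal.ofReal_add (hd.nn a) (hd.nn b)]
        exact ENNReal.ofReal_le_ofReal (hd.tri a b)
    _ = _ := by
        simp only [ee_add, ee_const (prob_pow hα _)]; rfl

lemma LE_pow_le (n : ℕ) : LE d (convPow α n) ≤ n * LE d α := by
  induction n with
  | zero => rw [LE, ee_pow_zero, hd.one]; simp
  | succ n ih =>
    refine (LE_pow_add_le hd hα n 1).trans ?_
    have : LE d (convPow α 1) = LE d α := ee_pow_one hα _
    rw [this]; push_cast; rw [add_mul, one_mul]; gcongr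

lemma LE_pow_ne_top (hf : LE d α ≠ ⊤) (n : ℕ) : LE d (convPow α n) ≠ ⊤ :=
  ne_top_of_le_ne_top (ENNReal.mul_ne_top (by simp) hf) (LE_pow_le hd hα n)

lemma u_le (hf : LE d α ≠ ⊤) (n : ℕ) :
    (LE d (convPow α n)).toReal ≤ n * (LE d α).toReal := by
  have := ENNReal.toReal_mono (ENNReal.mul_ne_top (by simp) hf) (LE_pow_le hd hα n)
  simpa [ENNReal.toReal_mul] using this
end

section
include hd hα hβ

lemma inner_le (n : ℕ) (a g : G) : ee (convPow β n) (fun c => ENNReal.ofReal (df d a g c))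
    ≤ 2 * ENNReal.ofReal (d g) + 2 * LE d (convPow β n) := by
  calc _ ≤ ee (convPow β n) (fun c => 2 * ENNReal.ofReal (d g) + 2 * ENNReal.ofReal (d c)) := by
        refine ee_mono _ fun c => ?_
        have h2 : (2 : ℝ≥0∞) = ENNReal.ofReal 2 := by simp
        rw [h2, ← ENNReal.ofReal_mul (by norm_num), ← ENNReal.ofReal_mul (by norm_num),
          ← ENNReal.ofReal_add (by have := hd.nn g; positivity) (by have := hd.nn c; positivity)]
        exact ENNReal.ofReal_le_ofReal (df_le hd a g c)
    _ = _ := by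
        rw [ee_add, ee_const (prob_pow hβ _), ee_mul]; rfl

lemma phiE_le (m n : ℕ) (g : G) :
    phiE d α β m n g ≤ 2 * ENNReal.ofReal (d g) + 2 * LE d (convPow β n) :=
  (ee_mono _ fun a => inner_le hd hα hβ n a g).trans_eq (ee_const (prob_pow hα m) _)

lemma phiE_le' (m n : ℕ) (g : G) :
    phiE d α β m n g ≤ 2 * ENNReal.ofReal (d g) + 2 * LE d (convPow α m) := by
  calc _ ≤ ee (convPow α m) (fun a => 2 * ENNReal.ofReal (d g) + 2 * ENNReal.ofReal (d a)) := by
        refine ee_mono _ fun a => ?_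
        refine le_trans (ee_mono _ fun c => ?_) (ee_const (prob_pow hβ n) _).le
        have h2 : (2 : ℝ≥0∞) = ENNReal.ofReal 2 := by simp
        rw [h2, ← ENNReal.ofReal_mul (by norm_num), ← ENNReal.ofReal_mul (by norm_num),
          ← ENNReal.ofReal_add (by have := hd.nn g; positivity) (by have := hd.nn a; positivity)]
        exact ENNReal.ofReal_le_ofReal (by have := df_le' hd a g c; linarith)
    _ = _ := by
        rw [ee_add, ee_const (prob_pow hα _), ee_mul]; rfl

lemma psi_add_phi (m n : ℕ) (g : G) :
    psiE d α β m n g + phiE d α β m n g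
      = LE d (convPow α m) + ENNReal.ofReal (d g) + LE d (convPow β n) := by
  rw [psiE, phiE, ← ee_add]
  simp only [← ee_add]
  calc _ = ee (convPow α m) (fun a => ee (convPow β n) (fun c =>
          ENNReal.ofReal (d a) + ENNReal.ofReal (d g) + ENNReal.ofReal (d c))) := by
        congr 1; ext a; congr 1; ext c
        rw [← ENNReal.ofReal_add (hd.nn _) (df_nonneg hd _ _ _),
          ← ENNReal.ofReal_add (hd.nn _) (hd.nn _),
          ← ENNReal.ofReal_add (add_nonneg (hd.nn _) (hd.nn _)) (hd.nn _)]
        congr 1; unfold df; ring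
    _ = _ := by
        simp only [ee_add, ee_const (prob_pow hα _), ee_const (prob_pow hβ _)]; rfl

lemma phi_bd (hfβ : LE d β ≠ ⊤) (m n : ℕ) (g : G) :
    (phiE d α β m n g).toReal ≤ 2 * d g + 2 * (n * (LE d β).toReal) := by
  have hb := LE_pow_ne_top hd hβ hfβ n
  have h1 : (2 * ENNReal.ofReal (d g)) ≠ ⊤ := ENNReal.mul_ne_top (by simp) (by simp)
  have h2 : (2 * LE d (convPow β n)) ≠ ⊤ := ENNReal.mul_ne_top (by simp) hb
  have := ENNReal.toReal_mono (ENNReal.add_ne_top.2 ⟨h1, h2⟩) (phiE_le hd hα hβ m n g)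
  rw [ENNReal.toReal_add h1 h2, ENNReal.toReal_mul, ENNReal.toReal_mul,
    ENNReal.toReal_ofReal (hd.nn g)] at this
  have := u_le hd hβ hfβ n
  simp at *; linarith

lemma phi_bd' (hfα : LE d α ≠ ⊤) (m n : ℕ) (g : G) :
    (phiE d α β m n g).toReal ≤ 2 * d g + 2 * (m * (LE d α).toReal) := by
  have hb := LE_pow_ne_top hd hα hfα m
  have h1 : (2 * ENNReal.ofReal (d g)) ≠ ⊤ := ENNReal.mul_ne_top (by simp) (by simp)
  have h2 : (2 * LE d (convPow α m)) ≠ ⊤ := ENNReal.mul_ne_top (by simp) hb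
  have := ENNReal.toReal_mono (ENNReal.add_ne_top.2 ⟨h1, h2⟩) (phiE_le' hd hα hβ m n g)
  rw [ENNReal.toReal_add h1 h2, ENNReal.toReal_mul, ENNReal.toReal_mul,
    ENNReal.toReal_ofReal (hd.nn g)] at this
  have := u_le hd hα hfα m
  simp at *; linarith

lemma phiE_ne_top (hfβ : LE d β ≠ ⊤) (m n : ℕ) (g : G) : phiE d α β m n g ≠ ⊤ :=
  ne_top_of_le_ne_top (ENNReal.add_ne_top.2 ⟨ENNReal.mul_ne_top (by simp) (by simp),
    ENNReal.mul_ne_top (by simp) (LE_pow_ne_top hd hβ hfβ n)⟩) (phiE_le hd hα hβ m n g)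

lemma psi_le_top (hfα : LE d α ≠ ⊤) (hfβ : LE d β ≠ ⊤) (m n : ℕ) (g : G) :
    psiE d α β m n g ≠ ⊤ := by
  refine ne_top_of_le_ne_top ?_ ((self_le_add_right _ _).trans_eq (psi_add_phi hd hα hβ m n g))
  simp [LE_pow_ne_top hd hα hfα m, LE_pow_ne_top hd hβ hfβ n]

lemma psi_eq (hfα : LE d α ≠ ⊤) (hfβ : LE d β ≠ ⊤) (m n : ℕ) (g : G) :
    (psiE d α β m n g).toReal = (LE d (convPow α m)).toReal + d g + (LE d (convPow β n)).toReal
      - (phiE d α β m n g).toReal := by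
  have h := congrArg ENNReal.toReal (psi_add_phi hd hα hβ m n g)
  rw [ENNReal.toReal_add (psi_le_top hd hα hβ hfα hfβ m n g) (phiE_ne_top hd hα hβ hfβ m n g),
    ENNReal.toReal_add (by simp [LE_pow_ne_top hd hα hfα m]) (LE_pow_ne_top hd hβ hfβ n),
    ENNReal.toReal_add (LE_pow_ne_top hd hα hfα m) (by simp),
    ENNReal.toReal_ofReal (hd.nn g)] at h
  linarith

omit hd hβ in
lemma sE_succ_left (m n : ℕ) : sE d α β (m + 1) n = ee α (psiE d α β m n) := by
  rw [sE, ee_pow_succ' hα, ee_comm]; rfl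

omit hd hα in
lemma sE_succ_right (m n : ℕ) : sE d α β m (n + 1) = ee β (psiE d α β m n) := by
  rw [sE]
  simp only [ee_pow_succ hβ]
  rw [ee_comm]
  congr 1; ext b
  simp only [psiE, mul_assoc]

omit hd hα hβ in
lemma sE_zero_right (m : ℕ) : sE d α β m 0 = LE d (convPow α m) := by
  simp only [sE, ee_pow_zero, mul_one]; rfl

omit hd hα hβ in
lemma sE_zero_left (n : ℕ) : sE d α β 0 n = LE d (convPow β n) := by
  simp only [sE, ee_pow_zero, one_mul]; rfl
end

/-- the norm -/
noncomputable def nrm (d σ : G → ℝ) : ℝ := ∑' g, (1 + d g) * |σ g|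

/-- finite norm -/
def Fin01 (d σ : G → ℝ) : Prop := Summable fun g => (1 + d g) * |σ g|

include hd in
lemma sum_bd {σ : G → ℝ} (hσ : Fin01 d σ) {f : G → ℝ} {C : ℝ}
    (hf : ∀ g, |f g| ≤ C * (1 + d g)) :
    Summable (fun g => σ g * f g) ∧ |∑' g, σ g * f g| ≤ C * nrm d σ := by
  have h1 : ∀ g, ‖σ g * f g‖ ≤ C * ((1 + d g) * |σ g|) := fun g => by
    rw [Real.norm_eq_abs, abs_mul]
    calc |σ g| * |f g| ≤ |σ g| * (C * (1 + d g)) := by gcongr; exact hf g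
      _ = _ := by ring
  have h2 : Summable fun g => C * ((1 + d g) * |σ g|) := Summable.mul_left C hσ
  refine ⟨Summable.of_norm_bounded h2 h1, ?_⟩
  have := tsum_of_norm_bounded h2.hasSum h1
  rwa [tsum_mul_left, Real.norm_eq_abs] at this

include hd in
lemma nrm_nonneg (σ : G → ℝ) : 0 ≤ nrm d σ :=
  tsum_nonneg fun g => mul_nonneg (by have := hd.nn g; positivity) (abs_nonneg _)

include hd in
lemma prob_fin01 (hα : IsProbMeasure α) (hf : LE d α ≠ ⊤) : Fin01 d α := by
  have := summable_ee hα.1 hf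
  have h2 := hα.2.1.add this
  refine h2.congr fun g => ?_
  rw [abs_of_nonneg (hα.1 g), ENNReal.toReal_ofReal (hd.nn g)]; ring

include hd in
lemma Fin01.sub {σ τ : G → ℝ} (hσ : Fin01 d σ) (hτ : Fin01 d τ) :
    Fin01 d (fun g => σ g - τ g) := by
  refine Summable.of_nonneg_of_le (fun g => mul_nonneg (by have := hd.nn g; positivity)
    (abs_nonneg _)) (fun g => ?_) (Summable.add hσ hτ)
  rw [← mul_add]
  have := hd.nn g
  gcongr
  exact abs_sub _ _

include hd hα hβ in
lemma step (hfα : LE d α ≠ ⊤) (hfβ : LE d β ≠ ⊤) (m n : ℕ) :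
    (sE d α β (m + 1) n).toReal - (sE d α β m (n + 1)).toReal
      = ∑' g, (α g - β g) * d g - ∑' g, (α g - β g) * (phiE d α β m n g).toReal := by
  rw [sE_succ_left hα, sE_succ_right hβ, toReal_ee hα.1 (psi_le_top hd hα hβ hfα hfβ m n),
    toReal_ee hβ.1 (psi_le_top hd hα hβ hfα hfβ m n)]
  have hFα := prob_fin01 hd hα hfα
  have hFβ := prob_fin01 hd hβ hfβ
  set A := (LE d (convPow α m)).toReal
  set B := (LE d (convPow β n)).toReal
  have hA : 0 ≤ A := ENNReal.toReal_nonneg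
  have hB : 0 ≤ B := ENNReal.toReal_nonneg
  have hψ : ∀ g, |(psiE d α β m n g).toReal| ≤ (1 + A + B) * (1 + d g) := fun g => by
    rw [abs_of_nonneg ENNReal.toReal_nonneg, psi_eq hd hα hβ hfα hfβ]
    have := hd.nn g
    have := ENNReal.toReal_nonneg (a := phiE d α β m n g)
    nlinarith [mul_nonneg hA (hd.nn g), mul_nonneg hB (hd.nn g)]
  rw [← (sum_bd hd hFα hψ).1.tsum_sub (sum_bd hd hFβ hψ).1]
  have hσ := hFα.sub hd hFβ
  have h1 : ∀ g, |d g| ≤ 1 * (1 + d g) := fun g => by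
    rw [abs_of_nonneg (hd.nn g)]; linarith
  have h2 : ∀ g, |(phiE d α β m n g).toReal| ≤ (2 + 2 * (n * (LE d β).toReal)) * (1 + d g) :=
    fun g => by
    rw [abs_of_nonneg ENNReal.toReal_nonneg]
    refine (phi_bd hd hα hβ hfβ m n g).trans ?_
    have : 0 ≤ n * (LE d β).toReal := by positivity
    nlinarith [mul_nonneg this (hd.nn g), hd.nn g]
  have hs1 := (sum_bd hd hσ h1).1
  have hs2 := (sum_bd hd hσ h2).1
  have hs0 : Summable fun g => α g - β g := hα.2.1.sub hβ.2.1
  have hz : ∑' g, (α g - β g) = 0 := by rw [hα.2.1.tsum_sub hβ.2.1, hα.2.2, hβ.2.2, sub_self]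
  rw [← hs1.tsum_sub hs2]
  have : ∑' g, (α g - β g) * (A + B) = 0 := by rw [tsum_mul_right, hz, zero_mul]
  rw [← add_zero (∑' g, ((α g - β g) * d g - (α g - β g) * (phiE d α β m n g).toReal)), ← this,
    ← (hs1.sub hs2).tsum_add (hs0.mul_right _)]
  congr 1; ext g
  rw [psi_eq hd hα hβ hfα hfβ]; ring

include hd in
/-- escape rate as a limit -/
lemma esc_lim (hα : IsProbMeasure α) (hf : LE d α ≠ ⊤) :
    Tendsto (fun n : ℕ => (LE d (convPow α n)).toReal / n) atTop
      (𝓝 (⨅ n : ℕ, (LE d (convPow α (n + 1))).toReal / (n + 1 : ℝ))) := by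
  have hsub : Subadditive fun n => (LE d (convPow α n)).toReal := fun m n => by
    have h1 := LE_pow_ne_top hd hα hf m
    have h2 := LE_pow_ne_top hd hα hf n
    rw [← ENNReal.toReal_add h1 h2]
    exact ENNReal.toReal_mono (ENNReal.add_ne_top.2 ⟨h1, h2⟩) (LE_pow_add_le hd hα m n)
  have hb : BddBelow (Set.range fun n : ℕ => (LE d (convPow α n)).toReal / n) :=
    ⟨0, by rintro _ ⟨n, rfl⟩; positivity⟩
  have := hsub.tendsto_lim hb
  convert this using 2
  rw [Subadditive.lim, iInf]
  congr 1
  ext x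
  constructor
  · rintro ⟨n, rfl⟩
    exact ⟨n + 1, by simp, by simp⟩
  · rintro ⟨n, hn, rfl⟩
    obtain ⟨k, rfl⟩ : ∃ k, n = k + 1 := ⟨n - 1, by have : 1 ≤ n := hn; omega⟩
    exact ⟨k, by simp⟩

include hd hα hβ in
lemma key (hfα : LE d α ≠ ⊤) (hfβ : LE d β ≠ ⊤) (N : ℕ) (e : ℝ) (he : 0 ≤ e)
    (hC : ∀ k j, N ≤ k → N ≤ j → ∀ g,
      |(phiE d α β k j g).toReal - (phiE d α β N N g).toReal| ≤ e) :
    |(⨅ n : ℕ, (LE d (convPow α (n + 1))).toReal / (n + 1 : ℝ))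
      - (⨅ n : ℕ, (LE d (convPow β (n + 1))).toReal / (n + 1 : ℝ))
      - (∑' g, (α g - β g) * d g - ∑' g, (α g - β g) * (phiE d α β N N g).toReal)|
      ≤ e * nrm d (fun g => α g - β g) := by
  set σ := fun g => α g - β g with hσdef
  have hσ : Fin01 d σ := (prob_fin01 hd hα hfα).sub hd (prob_fin01 hd hβ hfβ)
  set Ld := ∑' g, (α g - β g) * d g
  set p : ℕ → ℕ → ℝ := fun k j => ∑' g, σ g * (phiE d α β k j g).toReal with hp
  have hν := nrm_nonneg hd σ
  set C0 : ℝ := 2 + 2 * (N * ((LE d α).toReal + (LE d β).toReal)) with hC0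
  have hLα : 0 ≤ (LE d α).toReal := ENNReal.toReal_nonneg
  have hLβ : 0 ≤ (LE d β).toReal := ENNReal.toReal_nonneg
  have hC0n : 0 ≤ C0 := by positivity
  have hφβ : ∀ k j g, (phiE d α β k j g).toReal ≤ (2 + 2 * (j * (LE d β).toReal)) * (1 + d g) :=
    fun k j g => by
    refine (phi_bd hd hα hβ hfβ k j g).trans ?_
    have : 0 ≤ j * (LE d β).toReal := by positivity
    nlinarith [mul_nonneg this (hd.nn g), hd.nn g]
  have hφ0 : ∀ k j g, (k ≤ N ∨ j ≤ N) → (phiE d α β k j g).toReal ≤ C0 * (1 + d g) := by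
    intro k j g h
    have h1 := hd.nn g
    have hN : 0 ≤ N * ((LE d α).toReal + (LE d β).toReal) := by positivity
    have h3 : 2 * d g + 2 * (N * ((LE d α).toReal + (LE d β).toReal)) ≤ C0 * (1 + d g) := by
      nlinarith [mul_nonneg hN h1]
    refine le_trans ?_ h3
    rcases h with h | h
    · refine (phi_bd' hd hα hβ hfα k j g).trans ?_
      gcongr; linarith
    · refine (phi_bd hd hα hβ hfβ k j g).trans ?_
      gcongr; linarith
  have hsp : ∀ k j, Summable fun g => σ g * (phiE d α β k j g).toReal := fun k j =>
    (sum_bd hd hσ (f := fun g => (phiE d α β k j g).toReal)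
      (fun g => (abs_of_nonneg ENNReal.toReal_nonneg).trans_le (hφβ k j g))).1
  have hdiff : ∀ k j, p N N - p k j
      = ∑' g, σ g * ((phiE d α β N N g).toReal - (phiE d α β k j g).toReal) := fun k j => by
    rw [hp, ← (hsp N N).tsum_sub (hsp k j)]; simp only [mul_sub]
  have hbulk : ∀ k j, N ≤ k → N ≤ j → |p N N - p k j| ≤ e * nrm d σ := fun k j hk hj => by
    rw [hdiff]
    refine (sum_bd hd hσ fun g => ?_).2
    rw [abs_sub_comm]
    refine (hC k j hk hj g).trans ?_
    nlinarith [mul_nonneg he (hd.nn g)]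
  have hbdry : ∀ k j, (k ≤ N ∨ j ≤ N) → |p N N - p k j| ≤ C0 * nrm d σ := fun k j h => by
    rw [hdiff]
    refine (sum_bd hd hσ fun g => ?_).2
    have a1 := hφ0 k j g h
    have a2 := hφ0 N N g (Or.inl le_rfl)
    have a3 := ENNReal.toReal_nonneg (a := phiE d α β k j g)
    have a4 := ENNReal.toReal_nonneg (a := phiE d α β N N g)
    rw [abs_le]; constructor <;> linarith
  have hmain : ∀ n : ℕ, |(LE d (convPow α n)).toReal - (LE d (convPow β n)).toReal
      - n * (Ld - p N N)| ≤ n * (e * nrm d σ) + 2 * (N * (C0 * nrm d σ)) := by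
    intro n
    have htel : (LE d (convPow α n)).toReal - (LE d (convPow β n)).toReal
        = ∑ k ∈ Finset.range n, (Ld - p k (n - (k + 1))) := by
      have := Finset.sum_range_sub (fun k => (sE d α β k (n - k)).toReal) n
      simp only [Nat.sub_self, Nat.sub_zero, sE_zero_right, sE_zero_left] at this
      rw [← this]
      refine Finset.sum_congr rfl fun k hk => ?_
      have hk' : n - k = n - (k + 1) + 1 := by have := Finset.mem_range.1 hk; omega
      rw [hk']
      exact step hd hα hβ hfα hfβ k (n - (k + 1))
    have : (n : ℝ) * (Ld - p N N) = ∑ k ∈ Finset.range n, (Ld - p N N) := by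
      rw [Finset.sum_const, Finset.card_range, nsmul_eq_mul]
    rw [htel, this, ← Finset.sum_sub_distrib]
    refine (Finset.abs_sum_le_sum_abs _ _).trans ?_
    have hterm : ∀ k ∈ Finset.range n, |Ld - p k (n - (k + 1)) - (Ld - p N N)|
        ≤ e * nrm d σ + ((if k < N then C0 * nrm d σ else 0)
          + (if n - (k + 1) < N then C0 * nrm d σ else 0)) := by
      intro k _
      rw [show Ld - p k (n - (k + 1)) - (Ld - p N N) = p N N - p k (n - (k + 1)) by ring]
      have q1 : 0 ≤ e * nrm d σ := mul_nonneg he hν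
      have q2 : 0 ≤ C0 * nrm d σ := mul_nonneg hC0n hν
      by_cases h1 : k < N
      · have := hbdry k (n - (k + 1)) (Or.inl h1.le)
        simp only [h1, if_true]
        split_ifs <;> linarith
      · by_cases h2 : n - (k + 1) < N
        · have := hbdry k (n - (k + 1)) (Or.inr h2.le)
          simp only [h1, h2, if_true, if_false]; linarith
        · have := hbulk k (n - (k + 1)) (not_lt.1 h1) (not_lt.1 h2)
          simp only [h1, h2, if_false]; linarith
    refine (Finset.sum_le_sum hterm).trans ?_
    rw [Finset.sum_add_distrib, Finset.sum_add_distrib, ← Finset.sum_filter, ← Finset.sum_filter]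
    simp only [Finset.sum_const, nsmul_eq_mul, Finset.card_range]
    have c1 : (Finset.filter (fun k => k < N) (Finset.range n)).card ≤ N := by
      refine (Finset.card_le_card (t := Finset.range N) fun k hk => ?_).trans (by simp)
      simp at hk ⊢; omega
    have c2 : (Finset.filter (fun k => n - (k + 1) < N) (Finset.range n)).card ≤ N := by
      refine (Finset.card_le_card (t := Finset.Ico (n - N) n) fun k hk => ?_).trans (by simp; omega)
      simp at hk ⊢; omega
    have c1' : ((Finset.filter (fun k => k < N) (Finset.range n)).card : ℝ) ≤ N := by
      exact_mod_cast c1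
    have c2' : ((Finset.filter (fun k => n - (k + 1) < N) (Finset.range n)).card : ℝ) ≤ N := by
      exact_mod_cast c2
    have q2 : 0 ≤ C0 * nrm d σ := mul_nonneg hC0n hν
    have := mul_le_mul_of_nonneg_right c1' q2
    have := mul_le_mul_of_nonneg_right c2' q2
    linarith
  have t1 := (((esc_lim hd hα hfα).sub (esc_lim hd hβ hfβ)).sub_const (Ld - p N N)).abs
  have t2 : Tendsto (fun n : ℕ => e * nrm d σ + 2 * (N * (C0 * nrm d σ)) / (n : ℝ)) atTop
      (𝓝 (e * nrm d σ + 0)) :=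
    tendsto_const_nhds.add (tendsto_const_nhds.div_atTop tendsto_natCast_atTop_atTop)
  rw [add_zero] at t2
  refine le_of_tendsto_of_tendsto t1 t2 ?_
  filter_upwards [eventually_gt_atTop 0] with n hn
  have hn' : (0 : ℝ) < n := by exact_mod_cast hn
  have := hmain n
  rw [← sub_div, sub_eq_iff_eq_add.2 (show ((LE d (convPow α n)).toReal
    - (LE d (convPow β n)).toReal) / n = ((LE d (convPow α n)).toReal
    - (LE d (convPow β n)).toReal - n * (Ld - p N N)) / n + (Ld - p N N) by field_simp; ring),
    abs_div, abs_of_pos hn', div_le_iff₀ hn']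
  refine this.trans_eq ?_
  field_simp

/-! ### continuity -/

lemma ee_pow_cont (hα : IsProbMeasure α) (hβ : IsProbMeasure β) (C : ℝ≥0∞) (n : ℕ)
    (F : G → ℝ≥0∞) (hF : ∀ g, F g ≤ C) :
    ee (convPow α n) F ≤ ee (convPow β n) F
      + n * (C * ∑' g, ENNReal.ofReal |α g - β g|) := by
  induction n generalizing F with
  | zero => simp [ee_pow_zero]
  | succ n ih =>
    rw [ee_pow_succ hα, ee_pow_succ hβ]
    set S := ∑' g, ENNReal.ofReal |α g - β g|
    set H : G → ℝ≥0∞ := fun a => ee (convPow β n) (fun b => F (a * b)) with hH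
    have hHC : ∀ a, H a ≤ C := fun a =>
      (ee_mono _ fun b => hF (a * b)).trans_eq (ee_const (prob_pow hβ n) C)
    calc _ ≤ ee α (fun a => H a + n * (C * S)) := ee_mono _ fun a => ih _ (fun b => hF _)
      _ = ee α H + n * (C * S) := by rw [ee_add, ee_const hα]
      _ ≤ (ee β H + C * S) + n * (C * S) := by
        gcongr
        simp only [ee, S]
        rw [← ENNReal.tsum_mul_left, ← ENNReal.tsum_add]
        refine ENNReal.tsum_le_tsum fun g => ?_
        calc _ ≤ (ENNReal.ofReal (β g) + ENNReal.ofReal |α g - β g|) * H g := by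
              gcongr
              rw [← ENNReal.ofReal_add (hβ.1 g) (abs_nonneg _)]
              exact ENNReal.ofReal_le_ofReal (by have := le_abs_self (α g - β g); linarith)
          _ ≤ _ := by
              rw [add_mul, mul_comm C]; gcongr; exact hHC g
      _ = _ := by push_cast; ring

include hd hα hβ in
lemma phi_cont (hfα : LE d α ≠ ⊤) (hfβ : LE d β ≠ ⊤) (N : ℕ) (g : G) :
    |(phiE d α β N N g).toReal - (phiE d β β N N g).toReal|
      ≤ (N * (2 + 2 * (N * (LE d β).toReal)) * nrm d (fun g => α g - β g)) * (1 + d g) := by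
  have hσ : Fin01 d (fun g => α g - β g) :=
    (prob_fin01 hd hα hfα).sub hd (prob_fin01 hd hβ hfβ)
  set n1 := nrm d (fun g => α g - β g)
  have hS : ∑' g, ENNReal.ofReal |α g - β g| ≤ ENNReal.ofReal n1 := by
    rw [show n1 = ∑' g, (1 + d g) * |α g - β g| from rfl, ENNReal.ofReal_tsum_of_nonneg
      (fun g => mul_nonneg (by have := hd.nn g; positivity) (abs_nonneg _)) hσ]
    refine ENNReal.tsum_le_tsum fun g => ENNReal.ofReal_le_ofReal ?_
    have := hd.nn g
    have := abs_nonneg (α g - β g)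
    nlinarith
  have hS' : ∑' g, ENNReal.ofReal |β g - α g| ≤ ENNReal.ofReal n1 := by
    simpa only [abs_sub_comm] using hS
  set C := 2 * ENNReal.ofReal (d g) + 2 * LE d (convPow β N) with hCdef
  have hb := LE_pow_ne_top hd hβ hfβ N
  have hCt : C ≠ ⊤ := ENNReal.add_ne_top.2 ⟨ENNReal.mul_ne_top (by simp) (by simp),
    ENNReal.mul_ne_top (by simp) hb⟩
  have hCr : C.toReal ≤ (2 + 2 * (N * (LE d β).toReal)) * (1 + d g) := by
    rw [hCdef, ENNReal.toReal_add (ENNReal.mul_ne_top (by simp) (by simp))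
      (ENNReal.mul_ne_top (by simp) hb), ENNReal.toReal_mul, ENNReal.toReal_mul,
      ENNReal.toReal_ofReal (hd.nn g)]
    have := u_le hd hβ hfβ N
    have h0 : 0 ≤ N * (LE d β).toReal := by positivity
    simp only [ENNReal.toReal_ofNat]
    nlinarith [mul_nonneg h0 (hd.nn g), hd.nn g]
  have hn1 : 0 ≤ n1 := nrm_nonneg hd _
  have e1 := (ee_pow_cont hα hβ C N _ (fun a => inner_le hd hα hβ N a g)).trans
    (show _ ≤ phiE d β β N N g + N * (C * ENNReal.ofReal n1) by unfold phiE; gcongr)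
  have e2 := (ee_pow_cont hβ hα C N _ (fun a => inner_le hd hα hβ N a g)).trans
    (show _ ≤ phiE d α β N N g + N * (C * ENNReal.ofReal n1) by unfold phiE; gcongr)
  have f1 := phiE_ne_top hd hα hβ hfβ N N g
  have f2 := phiE_ne_top hd hβ hβ hfβ N N g
  have ft : (N : ℝ≥0∞) * (C * ENNReal.ofReal n1) ≠ ⊤ :=
    ENNReal.mul_ne_top (by simp) (ENNReal.mul_ne_top hCt (by simp))
  have g1 := ENNReal.toReal_mono (ENNReal.add_ne_top.2 ⟨f2, ft⟩) e1
  have g2 := ENNReal.toReal_mono (ENNReal.add_ne_top.2 ⟨f1, ft⟩) e2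
  rw [ENNReal.toReal_add f2 ft] at g1
  rw [ENNReal.toReal_add f1 ft] at g2
  have hr : ((N : ℝ≥0∞) * (C * ENNReal.ofReal n1)).toReal = N * (C.toReal * n1) := by
    simp [ENNReal.toReal_mul, hn1]
  rw [hr] at g1 g2
  have : N * (C.toReal * n1) ≤ N * (2 + 2 * (N * (LE d β).toReal)) * n1 * (1 + d g) := by
    calc N * (C.toReal * n1) ≤ N * (((2 + 2 * (N * (LE d β).toReal)) * (1 + d g)) * n1) := by
          gcongr
      _ = _ := by ring
  change (phiE d α β N N g).toReal ≤ _ at g1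
  change (phiE d β β N N g).toReal ≤ _ at g2
  rw [abs_le]; constructor <;> linarith

end B
end EscSq

namespace EscSq

section C
variable {G : Type*} [Group G] {d : G → ℝ} (hd : IsLen d) {α β : G → ℝ}

lemma phiE_eq_tsum (α β : G → ℝ) (m n : ℕ) (g : G) :
    phiE d α β m n g = ∑' p : G × G, ENNReal.ofReal (convPow α m p.1) *
      (ENNReal.ofReal (convPow β n p.2) * ENNReal.ofReal (df d p.1 g p.2)) := by
  simp only [phiE, ee, ENNReal.tsum_prod', ENNReal.tsum_mul_left]

include hd in
lemma triple (hα : IsProbMeasure α) (hβ : IsProbMeasure β) (hfβ : LE d β ≠ ⊤) {η : G → ℝ}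
    (hη : Fin01 d η) (m n : ℕ) :
    ∑' q : G × G × G, convPow α m q.1 * η q.2.1 * convPow β n q.2.2 * df d q.1 q.2.1 q.2.2
      = ∑' g, η g * (phiE d α β m n g).toReal := by
  have hPα := (prob_pow hα m).1
  have hPβ := (prob_pow hβ n).1
  let eqv : G × G × G ≃ G × G × G :=
    ⟨fun q => (q.2.1, q.1, q.2.2), fun q => (q.2.1, q.1, q.2.2), fun _ => rfl, fun _ => rfl⟩
  rw [← eqv.tsum_eq]
  set f : G × G × G → ℝ := fun q =>
    η q.1 * (convPow α m q.2.1 * (convPow β n q.2.2 * df d q.2.1 q.1 q.2.2)) with hf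
  have hfe : (fun q : G × G × G => convPow α m (eqv q).1 * η (eqv q).2.1 * convPow β n (eqv q).2.2
      * df d (eqv q).1 (eqv q).2.1 (eqv q).2.2) = f := by
    ext q; simp only [eqv, hf, Equiv.coe_fn_mk]; ring
  rw [hfe]
  have hnn : ∀ g (p : G × G), 0 ≤ convPow α m p.1 * (convPow β n p.2 * df d p.1 g p.2) :=
    fun g p => mul_nonneg (hPα _) (mul_nonneg (hPβ _) (df_nonneg hd _ _ _))
  have hsumE : ∀ g, ∑' p : G × G, ENNReal.ofReal
      (convPow α m p.1 * (convPow β n p.2 * df d p.1 g p.2)) = phiE d α β m n g := fun g => by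
    rw [phiE_eq_tsum]
    congr 1; ext p
    rw [ENNReal.ofReal_mul (hPα _), ENNReal.ofReal_mul (hPβ _)]
  have hreal : ∀ g, ∑' p : G × G, convPow α m p.1 * (convPow β n p.2 * df d p.1 g p.2)
      = (phiE d α β m n g).toReal := fun g => by
    rw [← hsumE, ENNReal.tsum_toReal_eq (by simp)]
    congr 1; ext p; rw [ENNReal.toReal_ofReal (hnn g p)]
  have hb : ∀ g, |(phiE d α β m n g).toReal| ≤ (2 + 2 * (n * (LE d β).toReal)) * (1 + d g) :=
    fun g => by
    rw [abs_of_nonneg ENNReal.toReal_nonneg]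
    refine (phi_bd hd hα hβ hfβ m n g).trans ?_
    have : 0 ≤ n * (LE d β).toReal := by positivity
    nlinarith [mul_nonneg this (hd.nn g), hd.nn g]
  have hs := (sum_bd hd hη hb).1.abs
  have hft : ∑' q, ENNReal.ofReal |f q| ≠ ⊤ := by
    have : ∑' q, ENNReal.ofReal |f q|
        = ∑' g, ENNReal.ofReal |η g * (phiE d α β m n g).toReal| := by
      rw [ENNReal.tsum_prod']
      congr 1; ext g
      rw [abs_mul, abs_of_nonneg ENNReal.toReal_nonneg, ENNReal.ofReal_mul (abs_nonneg _),
        ENNReal.ofReal_toReal (phiE_ne_top hd hα hβ hfβ m n g), ← hsumE, ← ENNReal.tsum_mul_left]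
      congr 1; ext p
      rw [← ENNReal.ofReal_mul (abs_nonneg _), hf]
      simp only
      rw [abs_mul, abs_of_nonneg (hnn g p)]
    rw [this, ← ENNReal.ofReal_tsum_of_nonneg (fun _ => abs_nonneg _) hs]
    exact ENNReal.ofReal_ne_top
  have hfs : Summable f := by
    have := ENNReal.summable_toReal hft
    refine Summable.of_abs ?_
    refine this.congr fun q => ?_
    rw [ENNReal.toReal_ofReal (abs_nonneg _)]
  rw [hfs.tsum_prod]
  congr 1; ext g
  simp only [hf]
  rw [tsum_mul_left, hreal]

include hd in
lemma diff_le (hα : IsProbMeasure α) (hβ : IsProbMeasure β) (hfβ : LE d β ≠ ⊤)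
    (g : G) (n m n' m' : ℕ) :
    |(phiE d α β m n g).toReal - (phiE d α β m' n' g).toReal| ≤
    ∑' p : (Fin (max m m') → G) × (Fin (max n n') → G),
      (∏ j : Fin (max m m'), α (p.1 j)) * (∏ i : Fin (max n n'), β (p.2 i)) *
      |df d (truncNegProd p.1 m) g (truncPosProd p.2 n) -
        df d (truncNegProd p.1 m') g (truncPosProd p.2 n')| := by
  set w : (Fin (max m m') → G) × (Fin (max n n') → G) → ℝ := fun p =>
    (∏ j : Fin (max m m'), α (p.1 j)) * (∏ i : Fin (max n n'), β (p.2 i)) with hw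
  have hw0 : ∀ p, 0 ≤ w p := fun p => mul_nonneg (Finset.prod_nonneg fun _ _ => hα.1 _)
    (Finset.prod_nonneg fun _ _ => hβ.1 _)
  have hE : ∀ k j, k ≤ max m m' → j ≤ max n n' →
      ee w (fun p => ENNReal.ofReal (df d (truncNegProd p.1 k) g (truncPosProd p.2 j)))
        = phiE d α β k j g := fun k j hk hj => by
    rw [phiE, ← tuple2 hα hβ (max m m') (max n n') k j hk hj, ee]
    congr 1; ext p
    rw [hw, ENNReal.ofReal_mul (Finset.prod_nonneg fun _ _ => hα.1 _),
      ENNReal.ofReal_prod_of_nonneg (fun _ _ => hα.1 _),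
      ENNReal.ofReal_prod_of_nonneg (fun _ _ => hβ.1 _)]
  have hR : ∀ k j, k ≤ max m m' → j ≤ max n n' →
      (Summable fun p => w p * df d (truncNegProd p.1 k) g (truncPosProd p.2 j)) ∧
      (phiE d α β k j g).toReal
        = ∑' p, w p * df d (truncNegProd p.1 k) g (truncPosProd p.2 j) := fun k j hk hj => by
    have h1 := hE k j hk hj
    have h2 := summable_ee hw0 (h1.trans_ne (phiE_ne_top hd hα hβ hfβ k j g))
    have h3 := toReal_ee hw0 (F := fun p => ENNReal.ofReal
      (df d (truncNegProd p.1 k) g (truncPosProd p.2 j))) (by simp)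
    rw [h1] at h3
    simp only [ENNReal.toReal_ofReal (df_nonneg hd _ _ _)] at h2 h3
    exact ⟨h2, h3⟩
  obtain ⟨s1, e1⟩ := hR m n (le_max_left _ _) (le_max_left _ _)
  obtain ⟨s2, e2⟩ := hR m' n' (le_max_right _ _) (le_max_right _ _)
  rw [e1, e2, ← s1.tsum_sub s2]
  have hs := (s1.sub s2).abs
  have := norm_tsum_le_tsum_norm (f := fun p => w p * df d (truncNegProd p.1 m) g
    (truncPosProd p.2 n) - w p * df d (truncNegProd p.1 m') g (truncPosProd p.2 n')) hs
  refine this.trans_eq ?_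
  congr 1; ext p
  rw [← mul_sub, Real.norm_eq_abs, abs_mul, abs_of_nonneg (hw0 p)]

end C

section D
variable {G X : Type*} [Group G] [MetricSpace X] [MulAction G X] {o : X}

lemma isLen (hiso : ∀ g : G, Isometry fun x : X => g • x) :
    IsLen (fun g : G => dist o (g • o)) where
  nn _ := dist_nonneg
  tri a b := by
    have := dist_triangle o (a • o) ((a * b) • o)
    have h2 := (hiso a).dist_eq o (b • o)
    simp only [mul_smul] at *; linarith
  lft a b := by
    have := dist_triangle_right o (a • o) ((a * b) • o)
    have h2 := (hiso a).dist_eq o (b • o)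
    simp only [mul_smul] at *; linarith
  rgt a b := by
    have := dist_triangle_left (a • o) ((a * b) • o) o
    have h2 := (hiso a).dist_eq o (b • o)
    simp only [mul_smul] at *; linarith
  one := by simp

lemma fin01_of_enorm {η : G → ℝ} (h : enorm01 o η ≠ ⊤) :
    Fin01 (fun g : G => dist o (g • o)) η := by
  have := ENNReal.summable_toReal h
  refine this.congr fun g => ?_
  rw [ENNReal.toReal_ofReal (by positivity)]

lemma enorm_eq {η : G → ℝ} (h : Fin01 (fun g : G => dist o (g • o)) η) :
    enorm01 o η = ENNReal.ofReal (nrm (fun g : G => dist o (g • o)) η) := by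
  rw [enorm01, nrm, ENNReal.ofReal_tsum_of_nonneg (fun g => by positivity) h]

lemma LE_ne_top {α : G → ℝ} (hα : IsProbMeasure α)
    (h : Fin01 (fun g : G => dist o (g • o)) α) : LE (fun g : G => dist o (g • o)) α ≠ ⊤ := by
  refine ne_top_of_le_ne_top (b := enorm01 o α) (by rw [enorm_eq h]; simp) ?_
  refine ENNReal.tsum_le_tsum fun g => ?_
  rw [← ENNReal.ofReal_mul (hα.1 g)]
  refine ENNReal.ofReal_le_ofReal ?_
  rw [abs_of_nonneg (hα.1 g)]
  have := hα.1 g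
  nlinarith

lemma escape_eq {α : G → ℝ} (hα : IsProbMeasure α) :
    escapeRate o α = ⨅ n : ℕ, (LE (fun g : G => dist o (g • o)) (convPow α (n + 1))).toReal
      / (n + 1 : ℝ) := by
  unfold escapeRate
  congr 1; ext n
  rw [LE, toReal_ee (prob_pow hα _).1 (by simp)]
  simp [firstMoment]

lemma diffExp_le (hiso : ∀ g : G, Isometry fun x : X => g • x) {α β : G → ℝ}
    (hα : IsProbMeasure α) (hβ : IsProbMeasure β)
    (hfβ : LE (fun g : G => dist o (g • o)) β ≠ ⊤) (g : G) (n m n' m' : ℕ) :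
    |(phiE (fun g : G => dist o (g • o)) α β m n g).toReal
      - (phiE (fun g : G => dist o (g • o)) α β m' n' g).toReal|
      ≤ defectDiffExp o (fun i : ℤ => if i < 0 then α else β) g n m n' m' := by
  refine (diff_le (isLen hiso) hα hβ hfβ g n m n' m').trans_eq ?_
  unfold defectDiffExp
  congr 1; ext p
  have h1 : ∀ j : ℕ, -((j : ℤ) + 1) < 0 := fun j => by omega
  have h2 : ∀ j : ℕ, ¬ ((j : ℤ) + 1 < 0) := fun j => by omega
  simp only [h1, h2, if_true, if_false]
  rfl

end D
end EscSq

set_option maxHeartbeats 2000000 in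
/-- Theorem 1.4-type formula: under the uniform `L¹`-Cauchy property of the defects,
the escape rate is differentiable with derivative `E_η d(o,go) − Δ`. -/
theorem escape_rate_deriv_squeeze
    {G X : Type*} [Group G] [Countable G] [MetricSpace X] [MulAction G X]
    (o : X) (hgeo : IsGeodesicSpace X)
    (hiso : ∀ g : G, Isometry fun x : X => g • x)
    (hind : HasIndepContracting G o)
    (μ : G → ℝ) (hμ : IsProbMeasure μ) (hne : NonElementary o μ)
    (hL : HasFiniteFirstMoment o μ)
    (η : G → ℝ) (hηfin : enorm01 o η ≠ ⊤)
    (μt : ℝ → G → ℝ) (hμtprob : ∀ t ∈ Set.Icc (-1 : ℝ) 1, IsProbMeasure (μt t))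
    (hlo : IsLittleO01 o fun t g => μt t g - μ g - t * η g)
    (hCauchy : ∃ ε : ℝ, 0 < ε ∧ ∀ ε' : ℝ, 0 < ε' → ∃ N : ℕ, 0 < N ∧
      ∀ ν : ℤ → G → ℝ,
        (∀ i : ℤ, i ≠ 0 → IsProbMeasure (ν i) ∧
          enorm01 o (fun h => ν i h - μ h) < ENNReal.ofReal ε) →
        ∀ g : G, ∀ n m n' m' : ℕ, N ≤ n → N ≤ m → N ≤ n' → N ≤ m' →
          defectDiffExp o ν g n m n' m' < ε') :
    ∃ Δ : ℝ,
      Filter.Tendsto (fun n : ℕ => ∑' q : G × G × G,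
          convPow μ n q.1 * η q.2.1 * convPow μ n q.2.2 * defect o q.1 q.2.1 q.2.2)
        Filter.atTop (𝓝 Δ) ∧
      HasDerivAt (fun t : ℝ => escapeRate o (μt t))
        ((∑' g : G, η g * dist o (g • o)) - Δ) 0 := by
  classical
  open EscSq in
  set d : G → ℝ := fun g => dist o (g • o) with hddef
  have hd : IsLen d := isLen hiso
  have hη : Fin01 d η := fin01_of_enorm hηfin
  have hμF : Fin01 d μ := by
    refine (hμ.2.1.add hL).congr fun g => ?_
    rw [abs_of_nonneg (hμ.1 g)]; ring
  have hμL : LE d μ ≠ ⊤ := LE_ne_top hμ hμF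
  obtain ⟨ε, hε, hCau⟩ := hCauchy
  set φ : (G → ℝ) → ℕ → ℕ → G → ℝ := fun α k j g => (phiE d α μ k j g).toReal with hφ
  have hφb : ∀ α, IsProbMeasure α → ∀ k j g,
      |φ α k j g| ≤ (2 + 2 * (j * (LE d μ).toReal)) * (1 + d g) := fun α hα k j g => by
    rw [abs_of_nonneg ENNReal.toReal_nonneg]
    refine (phi_bd hd hα hμ hμL k j g).trans ?_
    have : 0 ≤ j * (LE d μ).toReal := by positivity
    nlinarith [mul_nonneg this (hd.nn g), hd.nn g]
  -- uniform Cauchy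
  have hU : ∀ e : ℝ, 0 < e → ∃ N : ℕ, ∀ α, IsProbMeasure α → Fin01 d α →
      nrm d (fun g => α g - μ g) < ε → ∀ k j k' j', N ≤ k → N ≤ j → N ≤ k' → N ≤ j' → ∀ g,
      |φ α k j g - φ α k' j' g| ≤ e := by
    intro e he
    obtain ⟨N, -, hN⟩ := hCau e he
    refine ⟨N, fun α hα hαF hn k j k' j' hk hj hk' hj' g => ?_⟩
    refine (diffExp_le hiso hα hμ hμL g j k j' k').trans (hN _ ?_ g j k j' k' hj hk hj' hk').le
    intro i _
    by_cases hi : i < 0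
    · simp only [hi, if_true]
      refine ⟨hα, ?_⟩
      rw [enorm_eq (hαF.sub hd hμF)]
      exact (ENNReal.ofReal_lt_ofReal_iff hε).2 hn
    · simp only [hi, if_false]
      refine ⟨hμ, ?_⟩
      simp [enorm01, hε]
  set x : ℕ → ℝ := fun n => ∑' g, η g * φ μ n n g with hx
  set H := nrm d η with hH
  have hH0 : 0 ≤ H := nrm_nonneg hd η
  have hzero : nrm d (fun g => μ g - μ g) < ε := by simpa [nrm] using hε
  have hxd : ∀ e : ℝ, 0 < e → ∀ N : ℕ, (∀ k j k' j', N ≤ k → N ≤ j → N ≤ k' → N ≤ j' → ∀ g,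
      |φ μ k j g - φ μ k' j' g| ≤ e) → ∀ m n, N ≤ m → N ≤ n → |x m - x n| ≤ e * H := by
    intro e he N hN m n hm hn
    rw [hx]
    simp only
    rw [← (sum_bd hd hη (hφb μ hμ m m)).1.tsum_sub (sum_bd hd hη (hφb μ hμ n n)).1]
    simp only [← mul_sub]
    refine (sum_bd hd hη fun g => ?_).2
    refine (hN m m n n hm hm hn hn g).trans ?_
    nlinarith [mul_nonneg he.le (hd.nn g)]
  have hcs : CauchySeq x := by
    rw [Metric.cauchySeq_iff']
    intro e he
    obtain ⟨N, hN⟩ := hU (e / (2 * (H + 1))) (by positivity)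
    refine ⟨N, fun n hn => ?_⟩
    have := hxd _ (by positivity) N (hN μ hμ hμF hzero) n N hn le_rfl
    rw [Real.dist_eq]
    refine this.trans_lt ?_
    rw [div_mul_eq_mul_div, div_lt_iff₀ (by positivity)]
    nlinarith
  obtain ⟨Δ, hΔ⟩ := cauchySeq_tendsto_of_complete hcs
  refine ⟨Δ, hΔ.congr fun n => (triple hd hμ hμ hμL hη n n).symm, ?_⟩
  -- at zero
  have h00 : μt 0 = μ := by
    obtain ⟨δ, hδ, h⟩ := hlo 1 one_pos
    have h0 := h 0 (by simpa using hδ)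
    simp only [abs_zero, mul_zero, ENNReal.ofReal_zero, nonpos_iff_eq_zero, enorm01,
      ENNReal.tsum_eq_zero, ENNReal.ofReal_eq_zero, zero_mul, sub_zero] at h0
    ext g
    have h1 := h0 g
    have h2 : 0 ≤ dist o (g • o) := dist_nonneg
    have h3 := abs_nonneg (μt 0 g - μ g)
    have : |μt 0 g - μ g| = 0 := by nlinarith [mul_nonneg h2 h3]
    linarith [abs_eq_zero.1 this]
  rw [hasDerivAt_iff_isLittleO, Asymptotics.isLittleO_iff]
  intro c hc
  obtain ⟨N, hN⟩ := hU (c / (4 * (H + 1))) (by positivity)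
  set e := c / (4 * (H + 1)) with he
  have he0 : 0 < e := by positivity
  have hxΔ : |x N - Δ| ≤ e * H := by
    have : Tendsto (fun n => |x N - x n|) atTop (𝓝 |x N - Δ|) := (tendsto_const_nhds.sub hΔ).abs
    refine le_of_tendsto this ?_
    filter_upwards [eventually_ge_atTop N] with n hn
    exact hxd e he0 N (hN μ hμ hμF hzero) N n le_rfl hn
  set CN : ℝ := 2 + 2 * (N * (LE d μ).toReal) with hCN
  have hCN0 : 0 ≤ CN := by positivity
  set κ : ℝ := min 1 (c / (4 * (1 + CN))) with hκ
  have hκ0 : 0 < κ := by positivity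
  obtain ⟨δ, hδ, hlo'⟩ := hlo κ hκ0
  set τ : ℝ := min (min δ 1) (min (ε / (H + 1)) (c / (4 * (N * CN * (H + 1) ^ 2 + 1)))) with hτ
  have hτ0 : 0 < τ := by positivity
  filter_upwards [Metric.ball_mem_nhds (0 : ℝ) hτ0] with t ht
  rw [Metric.mem_ball, dist_zero_right, Real.norm_eq_abs] at ht
  have ht1 : |t| < δ := ht.trans_le ((min_le_left _ _).trans (min_le_left _ _))
  have ht2 : |t| < 1 := ht.trans_le ((min_le_left _ _).trans (min_le_right _ _))
  have ht3 : |t| < ε / (H + 1) := ht.trans_le ((min_le_right _ _).trans (min_le_left _ _))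
  have ht4 : |t| < c / (4 * (N * CN * (H + 1) ^ 2 + 1)) :=
    ht.trans_le ((min_le_right _ _).trans (min_le_right _ _))
  have hα : IsProbMeasure (μt t) := hμtprob t ⟨(abs_lt.1 ht2).1.le, (abs_lt.1 ht2).2.le⟩
  set α := μt t with hαdef
  set ρ : G → ℝ := fun g => α g - μ g - t * η g with hρ
  have hρe := hlo' t ht1
  have hρF : Fin01 d ρ := fin01_of_enorm (ne_top_of_le_ne_top ENNReal.ofReal_ne_top hρe)
  have hρn : nrm d ρ ≤ κ * |t| := by
    rw [enorm_eq hρF] at hρe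
    exact (ENNReal.ofReal_le_ofReal_iff (by positivity)).1 hρe
  set σ : G → ℝ := fun g => α g - μ g with hσ
  have hdom : ∀ g, (1 + d g) * |σ g| ≤ (1 + d g) * |ρ g| + |t| * ((1 + d g) * |η g|) := fun g => by
    have h1 : σ g = ρ g + t * η g := by simp only [hσ, hρ]; ring
    have h2 := abs_add_le (ρ g) (t * η g)
    rw [abs_mul] at h2
    have h3 := hd.nn g
    rw [h1]
    nlinarith
  have hσF : Fin01 d σ := Summable.of_nonneg_of_le
    (fun g => mul_nonneg (by have := hd.nn g; positivity) (abs_nonneg _)) hdom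
    (Summable.add hρF (Summable.mul_left _ hη))
  have hσn : nrm d σ ≤ (H + 1) * |t| := by
    have h1 : nrm d σ ≤ nrm d ρ + |t| * H := by
      rw [hH, nrm, nrm, nrm, ← tsum_mul_left, ← Summable.tsum_add hρF (Summable.mul_left _ hη)]
      exact Summable.tsum_le_tsum hdom hσF (Summable.add hρF (Summable.mul_left _ hη))
    have h2 : κ * |t| ≤ 1 * |t| := by gcongr; exact min_le_left _ _
    linarith
  have hαF : Fin01 d α := by
    refine Summable.of_nonneg_of_le
      (fun g => mul_nonneg (by have := hd.nn g; positivity) (abs_nonneg _)) (fun g => ?_)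
      (Summable.add hσF hμF)
    rw [← mul_add]
    have := hd.nn g
    gcongr
    have := abs_add_le (σ g) (μ g)
    simpa [hσ] using this
  have hαL : LE d α ≠ ⊤ := LE_ne_top hα hαF
  have hσε : nrm d σ < ε := by
    rw [lt_div_iff₀ (by positivity)] at ht3
    linarith
  have hkey := key hd hα hμ hαL hμL N e he0.le
    (fun k j hk hj g => hN α hα hαF hσε k j N N hk hj le_rfl le_rfl g)
  have hdd : ∀ g, |d g| ≤ 1 * (1 + d g) := fun g => by
    rw [abs_of_nonneg (hd.nn g)]; linarith
  -- decomposition of sums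
  have hsplit : ∀ f : G → ℝ, ∀ C, (∀ g, |f g| ≤ C * (1 + d g)) →
      ∑' g, (α g - μ g) * f g = t * ∑' g, η g * f g + ∑' g, ρ g * f g := by
    intro f C hf
    rw [← tsum_mul_left, ← Summable.tsum_add ((sum_bd hd hη hf).1.mul_left t) (sum_bd hd hρF hf).1]
    congr 1; ext g; simp only [hρ]; ring
  have s1 := hsplit d 1 hdd
  have s2 := hsplit (φ μ N N) CN (hφb μ hμ N N)
  have b1 := (sum_bd hd hρF hdd).2
  have b2 := (sum_bd hd hρF (hφb μ hμ N N)).2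
  have s3 : ∑' g, (α g - μ g) * φ α N N g = ∑' g, (α g - μ g) * φ μ N N g
      + ∑' g, σ g * (φ α N N g - φ μ N N g) := by
    rw [← (sum_bd hd hσF (hφb μ hμ N N)).1.tsum_add (sum_bd hd hσF (phi_cont hd hα hμ hαL hμL N)).1]
    congr 1; ext g; simp only [hσ]; ring
  have b3 := (sum_bd hd hσF (phi_cont hd hα hμ hαL hμL N)).2
  rw [← escape_eq hα, ← escape_eq hμ] at hkey
  change |_ - _ - (_ - ∑' g, (α g - μ g) * φ α N N g)| ≤ _ at hkey
  change |∑' g, σ g * (φ α N N g - φ μ N N g)| ≤ _ at b3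
  rw [s3, s2, s1] at hkey
  change |∑' g, ρ g * φ μ N N g| ≤ CN * _ at b2
  change nrm d σ < ε at hσε
  simp only [h00, sub_zero, smul_eq_mul, Real.norm_eq_abs]
  change |_ - _ - t * ((∑' g, η g * d g) - Δ)| ≤ _
  change |_ - _ - (_ - (t * x N + _ + _))| ≤ e * nrm d σ at hkey
  change _ ≤ N * CN * nrm d σ * nrm d σ at b3
  set Lη := ∑' g, η g * d g
  set A1 := ∑' g, ρ g * d g
  set A2 := ∑' g, ρ g * φ μ N N g
  set A3 := ∑' g, σ g * (φ α N N g - φ μ N N g)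
  have hρ0 := nrm_nonneg hd ρ
  have hσ0 := nrm_nonneg hd σ
  have t0 := abs_nonneg t
  have c1 : e * nrm d σ ≤ c / 4 * |t| := by
    calc e * nrm d σ ≤ e * ((H + 1) * |t|) := by gcongr
      _ = c / 4 * |t| := by rw [he]; field_simp
  have c2 : |t * (x N - Δ)| ≤ c / 4 * |t| := by
    rw [abs_mul]
    calc |t| * |x N - Δ| ≤ |t| * (e * H) := by gcongr
      _ ≤ |t| * (e * (H + 1)) := by gcongr; linarith
      _ = c / 4 * |t| := by rw [he]; field_simp
  have c3 : (1 + CN) * nrm d ρ ≤ c / 4 * |t| := by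
    calc (1 + CN) * nrm d ρ ≤ (1 + CN) * ((c / (4 * (1 + CN))) * |t|) := by
          gcongr
          refine hρn.trans ?_
          gcongr
          exact min_le_right _ _
      _ = c / 4 * |t| := by field_simp
  have c4 : N * CN * nrm d σ * nrm d σ ≤ c / 4 * |t| := by
    calc N * CN * nrm d σ * nrm d σ ≤ N * CN * ((H + 1) * |t|) * ((H + 1) * |t|) := by gcongr
      _ = (N * CN * (H + 1) ^ 2) * |t| * |t| := by ring
      _ ≤ c / 4 * |t| := by
        gcongr
        rw [lt_div_iff₀ (by positivity)] at ht4
        nlinarith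
  have d1 := abs_le.1 hkey
  have d2 := abs_le.1 b1
  have d3 := abs_le.1 b2
  have d4 := abs_le.1 b3
  have d5 := abs_le.1 c2
  rw [abs_le]
  constructor <;> linarith [d1.1, d1.2, d2.1, d2.2, d3.1, d3.2, d4.1, d4.2, d5.1, d5.2]
end
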